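/- Let D and G be Jordan domains in ℂ, let A ⊂ ∂D and B ⊂ ∂G be nonempty open subsets of the boundaries, and let W := ((D ∪ A) × B) ∪ (A × (G ∪ B)). Then for every continuous function f : W → ℂ such that f(a,·) is holomorphic on G for each a ∈ A and f(·,b) is holomorphic on D for each b ∈ B, there exists a unique function f̂, continuous on Ŵ ∪ W and holomorphic on Ŵ, with f̂ = f on W, where Ŵ := { (z,w) ∈ D × G : ω(z,A,D) + ω(w,B,G) < 1 } and ω denotes harmonic measure. -/

import Mathlib

open Complex Metric Filter Set MeasureTheory
open scoped Topology Real Manifold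

noncomputable section

/-- Plurisubharmonic (subharmonic when `V = ℂ`) real-valued function on a set
in a complex normed space: upper semicontinuous plus the sub-mean value
inequality over small circles in every complex direction. -/
def PSHOn {V : Type*} [NormedAddCommGroup V] [NormedSpace ℂ V]
    (u : V → ℝ) (D : Set V) : Prop :=
  UpperSemicontinuousOn u D ∧
  ∀ z ∈ D, ∀ v : V, ∀ᶠ r in 𝓝[>] (0:ℝ),
    u z ≤ (1 / (2 * Real.pi)) *
      ∫ θ in (0:ℝ)..(2 * Real.pi), u (z + (Complex.ofReal r * Complex.exp (θ * Complex.I)) • v)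

/-- The (unregularized) extremal function `h_{A,D}` relative to the canonical
system of approach regions. -/
def hFun {V : Type*} [NormedAddCommGroup V] [NormedSpace ℂ V]
    (A D : Set V) : V → ℝ := fun z =>
  sSup ((fun u : V → ℝ => u z) ''
    {u | PSHOn u D ∧ (∀ x ∈ D, u x ≤ 1) ∧ ∀ a ∈ A, Filter.limsup u (𝓝[D] a) ≤ 0})

/-- The relative extremal function `ω(·, A, D)` (canonical approach regions):
the upper semicontinuous regularization of `h_{A,D}`. -/
def omegaC {V : Type*} [NormedAddCommGroup V] [NormedSpace ℂ V]
    (A D : Set V) (z : V) : ℝ :=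
  Filter.limsup (hFun A D) (𝓝[D] z)

/-- A Jordan domain in `ℂ`: a bounded domain whose boundary is a Jordan curve
(homeomorphic to the unit circle). -/
def IsJordanDomain (D : Set ℂ) : Prop :=
  IsOpen D ∧ IsConnected D ∧ Bornology.IsBounded D ∧
    Nonempty (↥(sphere (0:ℂ) 1) ≃ₜ ↥(frontier D))

/-!
Near a point of `A` the boundary curve contains a path, and averaging logarithmic potentials along
it gives a barrier, so `ω(·, A, D)` vanishes at `A`. A holomorphic function bounded by `1` on `D`
and by `exp (-s)` at `A` is then bounded by `exp (-s (1 - ω(z, A, D)))`.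

For compact data regard `f` as a holomorphic map `Φ` from `G` to the continuous functions on `A`.
By Hahn–Banach, the two-constants estimate is dual to an approximation statement: evaluation at
`z ∈ D` is within `exp (-n (1 - ω(z, A, D)))` of a functional `L n z` of the boundary values, of norm
at most `exp (n ω(z, A, D))`, and `Φ w` is likewise close to the boundary values of some holomorphic
`F n w` on `D`. Where `ω(z, A, D) + ω(w, B, G) < 1` the products of these errors and norms decay
geometrically, so `L n z (Φ w)` and `F n w z` have a common limit; it is holomorphic in `z` because
of the second expression, in `w` because of the first, and it is the extension.

In general `D` and `A` are exhausted by sets staying away from `∂D \ A`. The extensions agree by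
uniqueness: on a horizontal slice of the hull, a sublevel set of `ω(·, A, D)`, every connected
component reaches `A`, where a function tending to `0` must vanish.
-/

/-- A subharmonic function with values in `[0, 1]`, the class over which the relative extremal
function can be computed. The sub-mean value property is only required on small circles. -/
structure IsUnitSubharmonic (u : ℂ → ℝ) (V : Set ℂ) : Prop where
  usc : UpperSemicontinuousOn u V
  nonneg : ∀ z ∈ V, 0 ≤ u z
  le_one : ∀ z ∈ V, u z ≤ 1
  le_circleAverage_small : ∀ z ∈ V, ∀ᶠ r in 𝓝[>] (0 : ℝ), u z ≤ Real.circleAverage u z r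

section CircleAverage

open Real (circleAverage)

variable {u : ℂ → ℝ} {V : Set ℂ}

theorem sphere_abs_subset_closedBall {X : Type*} [PseudoMetricSpace X] {x : X} {r : ℝ}
    (hr : 0 ≤ r) : sphere x |r| ⊆ closedBall x r := by
  rw [abs_of_nonneg hr]
  exact sphere_subset_closedBall

theorem eventually_nhdsGT_closedBall_subset {X : Type*} [PseudoMetricSpace X] {s : Set X}
    (hs : IsOpen s) {x : X} (hx : x ∈ s) : ∀ᶠ r in 𝓝[>] (0 : ℝ), closedBall x r ⊆ s :=
  (eventually_closedBall_subset (hs.mem_nhds hx)).filter_mono nhdsWithin_le_nhds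

theorem measurable_comp_circleMap_of_upperSemicontinuousOn {z : ℂ} {r : ℝ}
    (hu : UpperSemicontinuousOn u V) (hs : sphere z |r| ⊆ V) :
    Measurable fun θ => u (circleMap z r θ) := by
  refine UpperSemicontinuous.measurable fun θ c hc => ?_
  have h := hu _ (hs (circleMap_mem_sphere' z r θ)) c hc
  refine (tendsto_nhdsWithin_iff.2 ⟨(continuous_circleMap z r).tendsto θ, ?_⟩).eventually h
  exact Eventually.of_forall fun θ => hs (circleMap_mem_sphere' z r θ)

theorem circleIntegrable_of_norm_le {z : ℂ} {r C : ℝ}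
    (hm : Measurable fun θ => u (circleMap z r θ)) (hC : ∀ x ∈ sphere z |r|, ‖u x‖ ≤ C) :
    CircleIntegrable u z r := by
  refine intervalIntegrable_iff.2 (Measure.integrableOn_of_bounded (M := C)
    (by simpa using ENNReal.mul_ne_top (by simp) (by simp)) hm.aestronglyMeasurable ?_)
  exact Eventually.of_forall fun θ => hC _ (circleMap_mem_sphere' z r θ)

theorem circleAverage_const_mul (a : ℝ) (f : ℂ → ℝ) (c : ℂ) (R : ℝ) :
    circleAverage (fun z => a * f z) c R = a * circleAverage f c R :=
  Real.circleAverage_fun_smul (a := a) (f := f)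

theorem circleAverage_re {F : ℂ → ℂ} (hF : Differentiable ℂ F) (c : ℂ) (R : ℝ) :
    circleAverage (fun z => (F z).re) c R = (F c).re := by
  have h := Complex.reCLM.circleAverage_comp_comm (f := F) (c := c) (R := R)
    hF.continuous.continuousOn.circleIntegrable'
  rwa [hF.diffContOnCl.circleAverage] at h

theorem circleAverage_norm_sq (c : ℂ) (R : ℝ) :
    circleAverage (fun z => ‖z‖ ^ 2) c R = ‖c‖ ^ 2 + R ^ 2 := by
  set F : ℂ → ℂ := fun z => ((‖c‖ ^ 2 + R ^ 2 : ℝ) : ℂ) + 2 * starRingEnd ℂ c * (z - c) with hF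
  have hexpand : EqOn (fun z : ℂ => ‖z‖ ^ 2) (fun z => (F z).re) (sphere c |R|) := by
    intro z hz
    have hR : R ^ 2 = ‖z - c‖ ^ 2 := by rw [mem_sphere_iff_norm.1 hz, sq_abs]
    simp only [hF, hR, ← Complex.normSq_eq_norm_sq, Complex.normSq_apply]
    simp
    ring
  rw [Real.circleAverage_congr_sphere hexpand, circleAverage_re (by fun_prop)]
  simp only [hF, sub_self, mul_zero, add_zero, Complex.ofReal_re]

theorem tendsto_circleAverage_of_norm_le {φ : ℕ → ℂ → ℝ} {c : ℂ} {R C : ℝ}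
    (hm : ∀ n, Measurable fun θ => φ n (circleMap c R θ))
    (hb : ∀ n, ∀ z ∈ sphere c |R|, ‖φ n z‖ ≤ C)
    (ht : ∀ z ∈ sphere c |R|, Tendsto (fun n => φ n z) atTop (𝓝 (u z))) :
    Tendsto (fun n => circleAverage (φ n) c R) atTop (𝓝 (circleAverage u c R)) := by
  simp only [Real.circleAverage_def]
  refine Tendsto.const_smul (intervalIntegral.tendsto_integral_filter_of_dominated_convergence
    (fun _ => C) ?_ ?_ intervalIntegrable_const ?_) _
  · exact Eventually.of_forall fun n => (hm n).aestronglyMeasurable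
  · exact Eventually.of_forall fun n => Eventually.of_forall fun θ _ =>
      hb n _ (circleMap_mem_sphere' c R θ)
  · exact Eventually.of_forall fun θ _ => ht _ (circleMap_mem_sphere' c R θ)

theorem continuous_circleAverage {φ : ℂ → ℝ} (hφ : Continuous φ) (r : ℝ) :
    Continuous fun c => circleAverage φ c r := by
  have h : Continuous (Function.uncurry fun (c : ℂ) (θ : ℝ) => φ (circleMap c r θ)) := by
    unfold circleMap Function.uncurry
    fun_prop
  exact (intervalIntegral.continuous_parametric_intervalIntegral_of_continuous' (μ := volume)
    h 0 (2 * π)).const_smul (2 * π)⁻¹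

end CircleAverage

section MaximumPrinciple

open Real (circleAverage)

namespace IsUnitSubharmonic

variable {u : ℂ → ℝ} {V : Set ℂ}

theorem mono (hu : IsUnitSubharmonic u V) {W : Set ℂ} (h : W ⊆ V) : IsUnitSubharmonic u W :=
  ⟨hu.usc.mono h, fun z hz => hu.nonneg z (h hz), fun z hz => hu.le_one z (h hz),
    fun z hz => hu.le_circleAverage_small z (h hz)⟩

theorem norm_le_one (hu : IsUnitSubharmonic u V) {z : ℂ} (hz : z ∈ V) : ‖u z‖ ≤ 1 := by
  rw [Real.norm_of_nonneg (hu.nonneg z hz)]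
  exact hu.le_one z hz

theorem circleIntegrable (hu : IsUnitSubharmonic u V) {z : ℂ} {r : ℝ}
    (hs : sphere z |r| ⊆ V) : CircleIntegrable u z r :=
  circleIntegrable_of_norm_le (measurable_comp_circleMap_of_upperSemicontinuousOn hu.usc hs)
    fun _ hx => hu.norm_le_one (hs hx)

theorem zero (V : Set ℂ) : IsUnitSubharmonic (fun _ => 0) V :=
  ⟨continuousOn_const.upperSemicontinuousOn, fun _ _ => le_rfl, fun _ _ => zero_le_one,
    fun z _ => Eventually.of_forall fun r => by rw [Real.circleAverage_const]⟩

end IsUnitSubharmonic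

theorem exists_isMaxOn_of_frontier {X : Type*} [PseudoMetricSpace X] [ProperSpace X] {V : Set X}
    (hV : IsOpen V) (hb : Bornology.IsBounded V) {w : X → ℝ} (hw : UpperSemicontinuousOn w V)
    {z₀ : X} (hz₀ : z₀ ∈ V) (hfr : ∀ x ∈ frontier V, ∀ᶠ z in 𝓝[V] x, w z < w z₀) :
    ∃ x ∈ V, IsMaxOn w V x := by
  let S := {z ∈ V | w z₀ ≤ w z}
  have hSclosed : IsClosed S := by
    refine isClosed_of_closure_subset fun x hx => ?_
    have hfreq : ∃ᶠ z in 𝓝[V] x, w z₀ ≤ w z := by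
      rw [frequently_nhdsWithin_iff]
      exact (mem_closure_iff_frequently.1 hx).mono fun z hz => ⟨hz.2, hz.1⟩
    have hxV : x ∈ V := by
      by_contra hxV
      have hx' : x ∈ frontier V := by
        rw [hV.frontier_eq]
        exact ⟨closure_mono (sep_subset _ _) hx, hxV⟩
      exact hfreq ((hfr x hx').mono fun z => not_le.2)
    refine ⟨hxV, ?_⟩
    by_contra! hlt
    exact hfreq ((hw x hxV _ hlt).mono fun z => not_le.2)
  have hScompact : IsCompact S :=
    isCompact_of_isClosed_isBounded hSclosed (hb.subset (sep_subset _ _))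
  obtain ⟨x, hxS, hmax⟩ := UpperSemicontinuousOn.exists_isMaxOn (s := S) ⟨z₀, hz₀, le_rfl⟩
    hScompact (hw.mono (sep_subset _ _))
  refine ⟨x, hxS.1, fun z hz => ?_⟩
  rcases le_total (w z₀) (w z) with h | h
  exacts [hmax ⟨hz, h⟩, h.trans hxS.2]

-- The perturbation by `η ‖z‖ ^ 2` makes the sub-mean value inequality strict.
theorem IsUnitSubharmonic.not_isMaxOn_sub_add_norm_sq {V : Set ℂ} (hV : IsOpen V)
    {u h : ℂ → ℝ} (hu : IsUnitSubharmonic u V) (hh : ContinuousOn h V)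
    (hm : ∀ z ∈ V, ∀ᶠ r in 𝓝[>] (0 : ℝ), circleAverage h z r ≤ h z) {η : ℝ} (hη : 0 < η)
    {x : ℂ} (hx : x ∈ V) : ¬ IsMaxOn (fun z => u z - h z + η * ‖z‖ ^ 2) V x := by
  intro hmax
  obtain ⟨r, hru, hrh, hrV, hr0 : 0 < r⟩ := ((hu.le_circleAverage_small x hx).and ((hm x hx).and
    ((eventually_nhdsGT_closedBall_subset hV hx).and self_mem_nhdsWithin))).exists
  have hsub : sphere x |r| ⊆ V := (sphere_abs_subset_closedBall hr0.le).trans hrV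
  have hui := hu.circleIntegrable hsub
  have hhi : CircleIntegrable h x r := (hh.mono hsub).circleIntegrable'
  have hni : CircleIntegrable (fun z : ℂ => η * ‖z‖ ^ 2) x r :=
    ContinuousOn.circleIntegrable' (by fun_prop)
  have hsq : circleAverage (fun z : ℂ => η * ‖z‖ ^ 2) x r = η * (‖x‖ ^ 2 + r ^ 2) := by
    rw [circleAverage_const_mul, circleAverage_norm_sq]
  have havg := Real.circleAverage_mono_on_of_le_circle ((hui.sub hhi).add hni)
    (fun z hz => hmax (hsub hz))
  rw [Real.circleAverage_add (hui.sub hhi) hni, Real.circleAverage_sub hui hhi, hsq] at havg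
  have : 0 < η * r ^ 2 := by positivity
  linarith

theorem IsUnitSubharmonic.le_of_frontier {V : Set ℂ} (hV : IsOpen V) (hb : Bornology.IsBounded V)
    {u h : ℂ → ℝ} (hu : IsUnitSubharmonic u V) (hh : ContinuousOn h V)
    (hm : ∀ z ∈ V, ∀ᶠ r in 𝓝[>] (0 : ℝ), circleAverage h z r ≤ h z)
    (hbd : ∀ x ∈ frontier V, ∀ ε > 0, ∀ᶠ z in 𝓝[V] x, u z - h z ≤ ε) {z : ℂ} (hz : z ∈ V) :
    u z ≤ h z := by
  by_contra! hlt
  obtain ⟨R, hR0, hR⟩ := hb.subset_ball_lt 0 0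
  set s := u z - h z
  have hs : 0 < s := sub_pos.2 hlt
  set η := s / (4 * R ^ 2) with hη
  have hη0 : 0 < η := by positivity
  have hsmall : ∀ x ∈ V, η * ‖x‖ ^ 2 ≤ s / 4 := fun x hx => by
    have hηR : s / 4 = η * R ^ 2 := by rw [hη]; field_simp
    have := mem_ball_zero_iff.1 (hR hx)
    rw [hηR]
    gcongr
  have husc : UpperSemicontinuousOn (fun x => u x - h x + η * ‖x‖ ^ 2) V := by
    have hc : ContinuousOn (fun x => - h x + η * ‖x‖ ^ 2) V := by fun_prop
    simpa only [sub_eq_add_neg, add_assoc] using hu.usc.add hc.upperSemicontinuousOn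
  obtain ⟨x, hxV, hmax⟩ := exists_isMaxOn_of_frontier hV hb husc hz fun x hx => by
    filter_upwards [hbd x hx (s / 4) (by positivity), self_mem_nhdsWithin] with y hy hyV
    have := hsmall y hyV
    have : 0 ≤ η * ‖z‖ ^ 2 := by positivity
    linarith
  exact hu.not_isMaxOn_sub_add_norm_sq hV hh hm hη0 hxV hmax

end MaximumPrinciple

section SupConvolution

variable {X : Type*} [PseudoMetricSpace X] {K : Set X} {u : X → ℝ} {C : ℝ}

/-- The sup-convolution `x ↦ sup_{y ∈ K} (u y - n d(x, y))`, an `n`-Lipschitz majorant of `u` on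
`K`; it is only meaningful for `u` bounded above on `K`. -/
def supConvolution (K : Set X) (u : X → ℝ) (n : ℕ) (x : X) : ℝ :=
  ⨆ y : K, (u y - n * dist x y)

theorem bddAbove_supConvolution (hC : ∀ y ∈ K, u y ≤ C) (n : ℕ) (x : X) :
    BddAbove (range fun y : K => u y - n * dist x y) := by
  refine ⟨C, ?_⟩
  rintro _ ⟨y, rfl⟩
  have : 0 ≤ n * dist x y := by positivity
  linarith [hC y y.2]

theorem le_supConvolution (hC : ∀ y ∈ K, u y ≤ C) (n : ℕ) {x : X} (hx : x ∈ K) :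
    u x ≤ supConvolution K u n x := by
  simpa [supConvolution] using le_ciSup (bddAbove_supConvolution hC n x) ⟨x, hx⟩

theorem supConvolution_le (hK : K.Nonempty) (hC : ∀ y ∈ K, u y ≤ C) (n : ℕ) (x : X) :
    supConvolution K u n x ≤ C := by
  have := hK.to_subtype
  refine ciSup_le fun y => ?_
  have : 0 ≤ n * dist x y := by positivity
  linarith [hC y y.2]

theorem lipschitzWith_supConvolution (hK : K.Nonempty) (hC : ∀ y ∈ K, u y ≤ C) (n : ℕ) :
    LipschitzWith n (supConvolution K u n) := by
  have := hK.to_subtype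
  refine LipschitzWith.of_le_add_mul n fun x x' => ciSup_le fun y => ?_
  have hy : u y - n * dist x' y ≤ supConvolution K u n x' :=
    le_ciSup (bddAbove_supConvolution hC n x') y
  have hd : (n : ℝ) * dist x' y ≤ n * (dist x x' + dist x y) := by
    gcongr
    exact dist_triangle_left _ _ _
  simp only [NNReal.coe_natCast]
  linarith

theorem tendsto_supConvolution (hu : UpperSemicontinuousOn u K) (hC : ∀ y ∈ K, u y ≤ C) {x : X}
    (hx : x ∈ K) : Tendsto (fun n => supConvolution K u n x) atTop (𝓝 (u x)) := by
  have : Nonempty K := ⟨⟨x, hx⟩⟩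
  refine tendsto_order.2 ⟨fun a ha => Eventually.of_forall fun n =>
    ha.trans_le (le_supConvolution hC n hx), fun a ha => ?_⟩
  obtain ⟨b, hb, hba⟩ := exists_between ha
  obtain ⟨δ, hδ, hball⟩ := Metric.mem_nhdsWithin_iff.1 (hu x hx b hb)
  filter_upwards [eventually_ge_atTop ⌈(C - b) / δ⌉₊] with n hn
  refine lt_of_le_of_lt (ciSup_le fun y => ?_) hba
  by_cases hy : dist x y < δ
  · have hyb : u y < b := hball ⟨by rwa [mem_ball, dist_comm], y.2⟩
    have : 0 ≤ n * dist x y := by positivity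
    linarith
  · have hn' : C - b ≤ n * δ := (div_le_iff₀ hδ).1 (Nat.ceil_le.1 hn)
    have : (n : ℝ) * δ ≤ n * dist x y := by
      gcongr
      exact not_lt.1 hy
    linarith [hC y y.2]

theorem le_circleAverage_of_forall_continuous {K : Set ℂ} {u : ℂ → ℝ} {c : ℂ} {R a : ℝ}
    (hK : sphere c |R| ⊆ K) (hu : UpperSemicontinuousOn u K) (h0 : ∀ z ∈ K, 0 ≤ u z)
    (hC : ∀ z ∈ K, u z ≤ C)
    (h : ∀ φ : ℂ → ℝ, Continuous φ → (∀ z ∈ K, u z ≤ φ z) → a ≤ Real.circleAverage φ c R) :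
    a ≤ Real.circleAverage u c R := by
  have hne : K.Nonempty := ⟨_, hK (circleMap_mem_sphere' c R 0)⟩
  have hcont : ∀ n, Continuous (supConvolution K u n) := fun n =>
    (lipschitzWith_supConvolution hne hC n).continuous
  refine ge_of_tendsto' (tendsto_circleAverage_of_norm_le (C := C)
    (fun n => ((hcont n).comp (continuous_circleMap c R)).measurable) (fun n z hz => ?_)
    fun z hz => tendsto_supConvolution hu hC (hK hz))
    fun n => h _ (hcont n) fun z => le_supConvolution hC n
  rw [Real.norm_of_nonneg ((h0 z (hK hz)).trans (le_supConvolution hC n (hK hz)))]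
  exact supConvolution_le hne hC n z

end SupConvolution

section LocalToGlobal

open Real (circleAverage)

theorem fourier_two_pi_eq_circleMap {R : ℝ} (hR : R ≠ 0) (c : ℂ) (m : ℕ) (θ : ℝ) :
    fourier (T := 2 * π) m (θ : AddCircle (2 * π)) = ((circleMap c R θ - c) / R) ^ m := by
  have hR' : (R : ℂ) ≠ 0 := Complex.ofReal_ne_zero.2 hR
  rw [circleMap_sub_center, circleMap_zero, mul_div_cancel_left₀ _ hR', fourier_coe_apply,
    ← Complex.exp_nat_mul]
  congr 1
  push_cast
  field_simp

-- On the unit circle `z⁻ᵐ` is the conjugate of `zᵐ`, which is invisible after taking real parts.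
theorem exists_differentiable_re_eq_of_mem_span_fourier {R : ℝ} (hR : R ≠ 0) (c : ℂ)
    {p : C(AddCircle (2 * π), ℂ)} (hp : p ∈ Submodule.span ℂ (range (fourier (T := 2 * π))))
    (a : ℂ) : ∃ F : ℂ → ℂ, Differentiable ℂ F ∧
      ∀ θ : ℝ, (F (circleMap c R θ)).re = (a * p (θ : AddCircle (2 * π))).re := by
  induction hp using Submodule.span_induction generalizing a with
  | mem p hp =>
    obtain ⟨n, rfl⟩ := hp
    obtain ⟨m, rfl | rfl⟩ := n.eq_nat_or_neg
    · refine ⟨fun z => a * ((z - c) / R) ^ m, by fun_prop, fun θ => ?_⟩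
      rw [fourier_two_pi_eq_circleMap hR c]
    · refine ⟨fun z => starRingEnd ℂ a * ((z - c) / R) ^ m, by fun_prop, fun θ => ?_⟩
      rw [fourier_neg, fourier_two_pi_eq_circleMap hR c, ← Complex.conj_re, map_mul,
        Complex.conj_conj]
  | zero => exact ⟨0, differentiable_const _, by simp⟩
  | add p q _ _ ihp ihq =>
    obtain ⟨F, hF, hFp⟩ := ihp a
    obtain ⟨H, hH, hHq⟩ := ihq a
    exact ⟨F + H, hF.add hH, fun θ => by simp [mul_add, hFp, hHq]⟩
  | smul b p _ ih =>
    obtain ⟨F, hF, hFp⟩ := ih (a * b)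
    exact ⟨F, hF, fun θ => by simp [hFp, mul_assoc]⟩

theorem exists_differentiable_abs_re_sub_lt {φ : ℂ → ℝ} (hφ : Continuous φ) (c : ℂ) {R : ℝ}
    (hR : R ≠ 0) {ε : ℝ} (hε : 0 < ε) :
    ∃ F : ℂ → ℂ, Differentiable ℂ F ∧ ∀ z ∈ sphere c |R|, |(F z).re - φ z| < ε := by
  have : Fact (0 < 2 * π) := ⟨Real.two_pi_pos⟩
  have hper : Function.Periodic (fun θ : ℝ => (φ (circleMap c R θ) : ℂ)) (2 * π) := fun θ => by
    simp only [periodic_circleMap c R θ]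
  have hcont : Continuous hper.lift := continuous_coinduced_dom.2
    (Complex.continuous_ofReal.comp (hφ.comp (continuous_circleMap c R)))
  let g : C(AddCircle (2 * π), ℂ) := ⟨hper.lift, hcont⟩
  have hg : g ∈ (Submodule.span ℂ (range (fourier (T := 2 * π)))).topologicalClosure := by
    rw [span_fourier_closure_eq_top]
    trivial
  obtain ⟨p, hp, hgp⟩ := Metric.mem_closure_iff.1 hg ε hε
  obtain ⟨F, hF, hFp⟩ := exists_differentiable_re_eq_of_mem_span_fourier hR c hp 1
  refine ⟨F, hF, fun z hz => ?_⟩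
  rw [← range_circleMap] at hz
  obtain ⟨θ, rfl⟩ := hz
  have hθ := (ContinuousMap.dist_apply_le_dist (f := g) (g := p) θ).trans_lt hgp
  rw [dist_comm, Complex.dist_eq] at hθ
  have hre : (F (circleMap c R θ)).re - φ (circleMap c R θ) =
      (p (θ : AddCircle (2 * π)) - g (θ : AddCircle (2 * π))).re := by
    rw [hFp, one_mul, Complex.sub_re]
    rfl
  rw [hre]
  exact (Complex.abs_re_le_norm _).trans_lt hθ

namespace IsUnitSubharmonic

variable {u : ℂ → ℝ} {V : Set ℂ} {c : ℂ} {R : ℝ}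

theorem le_re_of_le_on_sphere (hu : IsUnitSubharmonic u V) (hR : 0 < R)
    (hV : closedBall c R ⊆ V) {F : ℂ → ℂ} (hF : Differentiable ℂ F)
    (hle : ∀ z ∈ sphere c R, u z ≤ (F z).re) : u c ≤ (F c).re := by
  have hFc := hF.continuous
  have hball : ball c R ⊆ V := ball_subset_closedBall.trans hV
  refine (hu.mono hball).le_of_frontier (h := fun z => (F z).re) isOpen_ball isBounded_ball
    (by fun_prop) (fun z _ => Eventually.of_forall fun r => (circleAverage_re hF z r).le)
    (fun x hx ε hε => ?_) (mem_ball_self hR)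
  rw [frontier_ball _ hR.ne'] at hx
  have husc := (hu.usc x (hV (sphere_subset_closedBall hx)) (u x + ε / 2) (by linarith)).filter_mono
    (nhdsWithin_mono x hball)
  have hre : ∀ᶠ z in 𝓝[ball c R] x, (F x).re - ε / 2 < (F z).re :=
    ((Complex.continuous_re.comp hFc).continuousWithinAt).eventually_const_lt
      (by simp only [Function.comp_apply]; linarith)
  filter_upwards [husc, hre] with z hz₁ hz₂
  linarith [hle x hx]

theorem le_circleAverage (hu : IsUnitSubharmonic u V) (hR : 0 < R) (hV : closedBall c R ⊆ V) :
    u c ≤ circleAverage u c R := by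
  have habs : |R| = R := abs_of_pos hR
  have hsph : sphere c |R| ⊆ V := (sphere_abs_subset_closedBall hR.le).trans hV
  refine le_circleAverage_of_forall_continuous subset_rfl (hu.usc.mono hsph)
    (fun z hz => hu.nonneg z (hsph hz)) (fun z hz => hu.le_one z (hsph hz)) fun φ hφ huφ => ?_
  refine le_of_forall_pos_le_add fun ε hε => ?_
  obtain ⟨F, hF, hFφ⟩ := exists_differentiable_abs_re_sub_lt hφ c hR.ne' (half_pos hε)
  have hFc := hF.continuous
  have huF : u c ≤ (F c).re + ε / 2 := by
    have := hu.le_re_of_le_on_sphere hR hV (F := fun z => F z + (ε / 2 : ℝ)) (by fun_prop)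
      fun z hz => by
        rw [← habs] at hz
        rw [Complex.add_re, Complex.ofReal_re]
        linarith [huφ z hz, (abs_lt.1 (hFφ z hz)).1]
    simpa using this
  have hFavg : (F c).re ≤ circleAverage φ c R + ε / 2 := by
    rw [← circleAverage_re hF c R, ← Real.circleAverage_const (ε / 2) c R,
      ← Real.circleAverage_fun_add hφ.continuousOn.circleIntegrable' (circleIntegrable_const _ _ _)]
    refine Real.circleAverage_mono (ContinuousOn.circleIntegrable' (by fun_prop))
      (ContinuousOn.circleIntegrable' (by fun_prop)) fun z hz => ?_
    linarith [(abs_lt.1 (hFφ z hz)).2]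
  linarith

end IsUnitSubharmonic

end LocalToGlobal

section Plurisubharmonic

theorem circleAverage_mul_norm_eq_integral (u : ℂ → ℝ) (z v : ℂ) (r : ℝ) :
    Real.circleAverage u z (r * ‖v‖) = (1 / (2 * Real.pi)) * ∫ θ in (0:ℝ)..(2 * Real.pi),
      u (z + (Complex.ofReal r * Complex.exp (θ * Complex.I)) • v) := by
  rw [Real.circleAverage_eq_integral_add (η := Complex.arg v), smul_eq_mul, one_div]
  congr 1
  refine intervalIntegral.integral_congr fun θ _ => ?_
  simp only [circleMap, smul_eq_mul]
  congr 2
  push_cast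
  rw [add_mul, Complex.exp_add]
  linear_combination r * Complex.exp (θ * I) * Complex.norm_mul_exp_arg_mul_I v

theorem PSHOn.isUnitSubharmonic_max {u : ℂ → ℝ} {D : Set ℂ} (hu : PSHOn u D) (hD : IsOpen D)
    (h1 : ∀ x ∈ D, u x ≤ 1) : IsUnitSubharmonic (fun z => max (u z) 0) D := by
  have husc : UpperSemicontinuousOn (fun z => max (u z) 0) D :=
    hu.1.sup continuousOn_const.upperSemicontinuousOn
  refine ⟨husc, fun x _ => le_max_right _ _, fun x hx => max_le (h1 x hx) zero_le_one,
    fun z hz => ?_⟩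
  filter_upwards [hu.2 z hz 1, eventually_nhdsGT_closedBall_subset hD hz, self_mem_nhdsWithin]
    with r hr hrD (hr0 : 0 < r)
  rw [← circleAverage_mul_norm_eq_integral, norm_one, mul_one] at hr
  have hs : sphere z |r| ⊆ D := (sphere_abs_subset_closedBall hr0.le).trans hrD
  have hmax : CircleIntegrable (fun z => max (u z) 0) z r := circleIntegrable_of_norm_le (C := 1)
    (measurable_comp_circleMap_of_upperSemicontinuousOn husc hs) fun x hx => by
      rw [Real.norm_of_nonneg (le_max_right _ _)]
      exact max_le (h1 x (hs hx)) zero_le_one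
  refine max_le (hr.trans ?_)
    (Real.circleAverage_nonneg_of_nonneg fun x _ => le_max_right _ _)
  by_cases hint : CircleIntegrable u z r
  · exact Real.circleAverage_mono hint hmax fun x _ => le_max_left _ _
  · rw [Real.circleAverage.integral_undef hint]
    exact Real.circleAverage_nonneg_of_nonneg fun x _ => le_max_right _ _

theorem IsUnitSubharmonic.pshOn {u : ℂ → ℝ} {D : Set ℂ} (hu : IsUnitSubharmonic u D) :
    PSHOn u D := by
  refine ⟨hu.usc, fun z hz v => ?_⟩
  simp only [← circleAverage_mul_norm_eq_integral]
  rcases eq_or_ne v 0 with rfl | hv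
  · simp
  · have hv0 : 0 < ‖v‖ := norm_pos_iff.2 hv
    have hlim : Tendsto (fun r : ℝ => r * ‖v‖) (𝓝[>] 0) (𝓝[>] 0) := by
      refine tendsto_nhdsWithin_iff.2 ⟨?_, ?_⟩
      · exact ((continuous_mul_const ‖v‖).tendsto' 0 0 (zero_mul _)).mono_left nhdsWithin_le_nhds
      · filter_upwards [self_mem_nhdsWithin] with r hr using mul_pos hr hv0
    exact hlim.eventually (hu.le_circleAverage_small z hz)

end Plurisubharmonic

section RelativeExtremalFunction

open Real (circleAverage)

/-- `limsup u ≤ 0` at every point of `A` along `D`, for functions that need not be bounded. -/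
def VanishesAt (u : ℂ → ℝ) (D A : Set ℂ) : Prop :=
  ∀ a ∈ A, ∀ ε > 0, ∀ᶠ z in 𝓝[D] a, u z ≤ ε

variable {D A : Set ℂ} {v : ℂ → ℝ} {z : ℂ}

theorem VanishesAt.zero (D A : Set ℂ) : VanishesAt (fun _ => 0) D A :=
  fun _ _ _ hε => Eventually.of_forall fun _ => hε.le

theorem isCoboundedUnder_le_of_forall_nonneg (hz : z ∈ closure D) (hv : ∀ x ∈ D, 0 ≤ v x) :
    IsCoboundedUnder (· ≤ ·) (𝓝[D] z) v := by
  have : (𝓝[D] z).NeBot := mem_closure_iff_nhdsWithin_neBot.1 hz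
  exact IsCoboundedUnder.of_frequently_ge
    (eventually_nhdsWithin_of_forall hv).frequently

theorem isBoundedUnder_le_of_forall_le {C : ℝ} (hv : ∀ x ∈ D, v x ≤ C) :
    IsBoundedUnder (· ≤ ·) (𝓝[D] z) v :=
  ⟨C, eventually_map.2 (eventually_nhdsWithin_of_forall hv)⟩

theorem IsUnitSubharmonic.le_hFun (hv : IsUnitSubharmonic v D) (hvA : VanishesAt v D A)
    (hA : A ⊆ closure D) (hz : z ∈ D) : v z ≤ hFun A D z := by
  refine le_csSup ⟨1, ?_⟩ ⟨v, ⟨hv.pshOn, hv.le_one, fun a ha => ?_⟩, rfl⟩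
  · rintro _ ⟨u, hu, rfl⟩
    exact hu.2.1 z hz
  · refine le_of_forall_pos_le_add fun ε hε => ?_
    rw [zero_add]
    exact limsup_le_of_le (isCoboundedUnder_le_of_forall_nonneg (hA ha) hv.nonneg) (hvA a ha ε hε)

theorem hFun_nonneg (hA : A ⊆ closure D) (hz : z ∈ D) : 0 ≤ hFun A D z :=
  (IsUnitSubharmonic.zero D).le_hFun (VanishesAt.zero D A) hA hz

theorem hFun_le_of_forall (hD : IsOpen D) {c : ℝ}
    (h : ∀ v, IsUnitSubharmonic v D → VanishesAt v D A → v z ≤ c) : hFun A D z ≤ c := by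
  refine Real.sSup_le ?_ (h _ (IsUnitSubharmonic.zero D) (VanishesAt.zero D A))
  rintro _ ⟨u, ⟨hu, hu1, huA⟩, rfl⟩
  refine (le_max_left (u z) 0).trans
    (h _ (hu.isUnitSubharmonic_max hD hu1) fun a ha ε hε => ?_)
  filter_upwards [eventually_lt_of_limsup_lt ((huA a ha).trans_lt hε)
    (isBoundedUnder_le_of_forall_le hu1)] with x hx
  exact max_le hx.le hε.le

theorem hFun_le_one (hD : IsOpen D) (hz : z ∈ D) : hFun A D z ≤ 1 :=
  hFun_le_of_forall hD fun _ hv _ => hv.le_one z hz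

theorem omegaC_le_of_eventually (hA : A ⊆ closure D) (hz : z ∈ D) {c : ℝ}
    (h : ∀ᶠ x in 𝓝[D] z, hFun A D x ≤ c) : omegaC A D z ≤ c :=
  limsup_le_of_le
    (isCoboundedUnder_le_of_forall_nonneg (subset_closure hz) fun _ => hFun_nonneg hA) h

theorem hFun_le_omegaC (hD : IsOpen D) (hz : z ∈ D) : hFun A D z ≤ omegaC A D z :=
  le_limsup_of_le (isBoundedUnder_le_of_forall_le fun _ => hFun_le_one hD)
    fun _ hb => hb.self_of_nhdsWithin hz

theorem upperSemicontinuousOn_omegaC (hD : IsOpen D) (hA : A ⊆ closure D) :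
    UpperSemicontinuousOn (omegaC A D) D := by
  intro z _ c hc
  obtain ⟨c', hωc', hc'⟩ := exists_between hc
  have hlt := eventually_lt_of_limsup_lt hωc'
    (isBoundedUnder_le_of_forall_le fun _ => hFun_le_one hD)
  filter_upwards [eventually_eventually_nhdsWithin.2 hlt, self_mem_nhdsWithin] with x hx hxD
  exact (omegaC_le_of_eventually hA hxD (hx.mono fun _ => le_of_lt)).trans_lt hc'

theorem omegaC_nonneg (hD : IsOpen D) (hA : A ⊆ closure D) (hz : z ∈ D) : 0 ≤ omegaC A D z :=
  (hFun_nonneg hA hz).trans (hFun_le_omegaC hD hz)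

theorem omegaC_le_one (hD : IsOpen D) (hA : A ⊆ closure D) (hz : z ∈ D) : omegaC A D z ≤ 1 :=
  omegaC_le_of_eventually hA hz (eventually_nhdsWithin_of_forall fun _ => hFun_le_one hD)

theorem IsUnitSubharmonic.le_omegaC (hv : IsUnitSubharmonic v D) (hvA : VanishesAt v D A)
    (hD : IsOpen D) (hA : A ⊆ closure D) (hz : z ∈ D) : v z ≤ omegaC A D z :=
  (hv.le_hFun hvA hA hz).trans (hFun_le_omegaC hD hz)

theorem omegaC_le_circleAverage (hD : IsOpen D) (hA : A ⊆ closure D) {r : ℝ} (hr : 0 < r)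
    (hzr : closedBall z (2 * r) ⊆ D) : omegaC A D z ≤ circleAverage (omegaC A D) z r := by
  have hz : z ∈ D := hzr (mem_closedBall_self (by positivity))
  have hball : ∀ x ∈ ball z r, closedBall x r ⊆ closedBall z (2 * r) := fun x hx =>
    closedBall_subset_closedBall' (by linarith [mem_ball.1 hx])
  refine le_circleAverage_of_forall_continuous (K := closedBall z (2 * r))
    ((sphere_abs_subset_closedBall hr.le).trans (hball z (mem_ball_self hr)))
    ((upperSemicontinuousOn_omegaC hD hA).mono hzr) (fun x hx => omegaC_nonneg hD hA (hzr hx))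
    (fun x hx => omegaC_le_one hD hA (hzr hx)) fun φ hφ hωφ => ?_
  have hfun : ∀ᶠ x in 𝓝[D] z, hFun A D x ≤ circleAverage φ x r := by
    filter_upwards [mem_nhdsWithin_of_mem_nhds (ball_mem_nhds z hr)] with x hx
    refine hFun_le_of_forall hD fun v hv hvA => ?_
    have hxs := (sphere_abs_subset_closedBall hr.le).trans (hball x hx)
    refine (hv.le_circleAverage hr ((hball x hx).trans hzr)).trans ?_
    exact Real.circleAverage_mono (hv.circleIntegrable (hxs.trans hzr))
      hφ.continuousOn.circleIntegrable'
      fun w hw => (hv.le_omegaC hvA hD hA (hzr (hxs hw))).trans (hωφ w (hxs hw))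
  refine le_of_forall_pos_le_add fun ε hε => omegaC_le_of_eventually hA hz ?_
  have hlt := ((continuous_circleAverage hφ r).continuousWithinAt (s := D)
    (x := z)).eventually_lt_const (lt_add_of_pos_right _ hε)
  filter_upwards [hfun, hlt] with x hx hx' using hx.trans hx'.le

theorem isUnitSubharmonic_omegaC (hD : IsOpen D) (hA : A ⊆ closure D) :
    IsUnitSubharmonic (omegaC A D) D := by
  refine ⟨upperSemicontinuousOn_omegaC hD hA, fun _ => omegaC_nonneg hD hA,
    fun _ => omegaC_le_one hD hA, fun z hz => ?_⟩
  have hlim : Tendsto (fun r : ℝ => 2 * r) (𝓝 0) (𝓝 0) :=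
    (continuous_const_mul (2 : ℝ)).tendsto' 0 0 (mul_zero _)
  filter_upwards [(hlim.eventually (eventually_closedBall_subset (hD.mem_nhds hz))).filter_mono
    nhdsWithin_le_nhds, self_mem_nhdsWithin] with r hr hr0
  exact omegaC_le_circleAverage hD hA hr0 hr

end RelativeExtremalFunction

section LogPotential

open Real (circleAverage)

variable {K : Set ℂ} {s : ℝ → ℂ} {μ : Measure ℝ} {z : ℂ}

/-- The logarithmic potential of the image under `s` of the measure `μ`. -/
def logPotential (μ : Measure ℝ) (s : ℝ → ℂ) (z : ℂ) : ℝ :=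
  ∫ t, Real.log ‖z - s t‖ ∂μ

theorem exists_abs_log_norm_sub_le {K L : Set ℂ} (hK : IsCompact K) (hL : IsCompact L)
    (h : L ⊆ Kᶜ) : ∃ C, ∀ z ∈ L, ∀ k ∈ K, |Real.log ‖z - k‖| ≤ C := by
  have hc : ContinuousOn (fun p : ℂ × ℂ => Real.log ‖p.1 - p.2‖) (L ×ˢ K) := by
    refine ContinuousOn.log (by fun_prop) fun p hp => norm_ne_zero_iff.2 (sub_ne_zero.2 ?_)
    exact fun heq => h hp.1 (heq ▸ hp.2)
  obtain ⟨C, hC⟩ := (hL.prod hK).exists_bound_of_continuousOn hc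
  exact ⟨C, fun z hz k hk => hC (z, k) ⟨hz, hk⟩⟩

theorem measurable_log_norm_sub (hs : Measurable s) (z : ℂ) :
    Measurable fun t => Real.log ‖z - s t‖ :=
  Real.measurable_log.comp (measurable_const.sub hs).norm

theorem integrable_log_norm_sub [IsFiniteMeasure μ] (hK : IsCompact K) (hs : Measurable s)
    (hsK : ∀ t, s t ∈ K) (hz : z ∉ K) : Integrable (fun t => Real.log ‖z - s t‖) μ := by
  obtain ⟨C, hC⟩ := exists_abs_log_norm_sub_le hK (isCompact_singleton (x := z)) (by simpa)
  exact Integrable.of_bound (C := C) (measurable_log_norm_sub hs z).aestronglyMeasurable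
    (Eventually.of_forall fun t => hC z rfl _ (hsK t))

theorem continuousOn_logPotential [IsFiniteMeasure μ] (hK : IsCompact K) (hs : Measurable s)
    (hsK : ∀ t, s t ∈ K) : ContinuousOn (logPotential μ s) Kᶜ := by
  refine fun z hz => ContinuousAt.continuousWithinAt ?_
  obtain ⟨r, hr0, hr⟩ := nhds_basis_closedBall.mem_iff.1 (hK.isClosed.isOpen_compl.mem_nhds hz)
  obtain ⟨C, hC⟩ := exists_abs_log_norm_sub_le hK (isCompact_closedBall z r) hr
  refine continuousAt_of_dominated (bound := fun _ => C)
    (Eventually.of_forall fun x => (measurable_log_norm_sub hs x).aestronglyMeasurable) ?_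
    (integrable_const _) (Eventually.of_forall fun t => ?_)
  · filter_upwards [closedBall_mem_nhds z hr0] with x hx
    exact Eventually.of_forall fun t => hC x hx _ (hsK t)
  · refine ContinuousAt.log (by fun_prop) (norm_ne_zero_iff.2 (sub_ne_zero.2 ?_))
    exact fun heq => hz (heq ▸ hsK t)

theorem circleAverage_logPotential [IsFiniteMeasure μ] (hK : IsCompact K) (hs : Measurable s)
    (hsK : ∀ t, s t ∈ K) {r : ℝ} (hz : closedBall z |r| ⊆ Kᶜ) :
    circleAverage (logPotential μ s) z r = logPotential μ s z := by
  obtain ⟨C, hC⟩ := exists_abs_log_norm_sub_le hK (isCompact_closedBall z |r|) hz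
  have hfin : IsFiniteMeasure (volume.restrict (uIoc 0 (2 * π))) := ⟨by simp [uIoc]⟩
  have hint : Integrable (Function.uncurry fun θ t => Real.log ‖circleMap z r θ - s t‖)
      ((volume.restrict (uIoc 0 (2 * π))).prod μ) := by
    refine Integrable.of_bound (C := C) (Measurable.aestronglyMeasurable ?_)
      (Eventually.of_forall fun p =>
        hC _ (sphere_subset_closedBall (circleMap_mem_sphere' z r p.1)) _ (hsK _))
    exact Real.measurable_log.comp
      (((continuous_circleMap z r).measurable.comp measurable_fst).sub
        (hs.comp measurable_snd)).norm
  unfold logPotential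
  rw [Real.circleAverage_def, intervalIntegral_integral_swap hint, ← integral_smul]
  refine integral_congr_ae (Eventually.of_forall fun t => ?_)
  have hharm := AnalyticOnNhd.circleAverage_log_norm_of_ne_zero (c := z) (R := r)
    (g := fun z => z - s t) (fun _ _ => by fun_prop)
    fun u hu => sub_ne_zero.2 fun heq => hz hu (heq ▸ hsK t)
  rwa [Real.circleAverage_def] at hharm

end LogPotential

section Barrier

open Real (circleAverage)

theorem mul_log_add_sub_le_mul_log {δ y : ℝ} (hδ : 0 < δ) (hy : 0 ≤ y) :
    y * Real.log δ + (y - δ) ≤ y * Real.log y := by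
  rcases hy.eq_or_lt with rfl | hy
  · simp only [zero_mul]
    linarith
  · have hlog := Real.log_le_sub_one_of_pos (div_pos hδ hy)
    rw [Real.log_div hδ.ne' hy.ne'] at hlog
    have hmul := mul_le_mul_of_nonneg_left hlog hy.le
    rw [mul_sub, mul_sub, mul_div_cancel₀ _ hy.ne'] at hmul
    linarith

theorem le_integral_log_sub {x δ : ℝ} (hx : 0 ≤ x) (hδ : 0 < δ) :
    δ * (Real.log δ - 2) ≤ ∫ t in (0 : ℝ)..δ, Real.log (x - t) := by
  rw [intervalIntegral.integral_comp_sub_left (fun t => Real.log t), integral_log, sub_zero]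
  rcases le_or_gt δ x with h | h
  · have hδx : δ * Real.log δ ≤ δ * Real.log x := by gcongr
    have hsub : (x - δ) * Real.log (x - δ) ≤ (x - δ) * Real.log x := by
      rcases h.eq_or_lt with rfl | h
      · simp
      · have : 0 < x - δ := sub_pos.2 h
        gcongr
        linarith
    linarith
  · have h₁ := mul_log_add_sub_le_mul_log hδ hx
    have h₂ := mul_log_add_sub_le_mul_log hδ (sub_nonneg.2 h.le)
    rw [← Real.log_neg_eq_log (δ - x), neg_sub] at h₂
    linarith

theorem exists_measurable_dist_eq {X : Type*} [PseudoMetricSpace X] [MeasurableSpace X]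
    [BorelSpace X] {γ : ℝ → X} (hγ : Continuous γ) {T : ℝ} (hT : 0 ≤ T) {δ : ℝ}
    (hδT : δ ≤ dist (γ T) (γ 0)) :
    ∃ s : ℝ → X, Measurable s ∧ (∀ t, s t ∈ γ '' Icc 0 T) ∧
      ∀ t ∈ Icc 0 δ, dist (s t) (γ 0) = t := by
  let S : ℝ → Set ℝ := fun t => {x ∈ Icc 0 T | t ≤ dist (γ x) (γ 0)}
  -- The first exit times are monotone in the radius, hence measurable.
  let τ : ℝ → ℝ := fun t => sInf (S t)
  have hSclosed : ∀ t, IsClosed (S t) := fun t =>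
    isClosed_Icc.inter (isClosed_le continuous_const (hγ.dist continuous_const))
  have hSbdd : ∀ t, BddBelow (S t) := fun t => ⟨0, fun x hx => hx.1.1⟩
  have hSne : ∀ t ≤ δ, (S t).Nonempty := fun t ht => ⟨T, ⟨hT, le_rfl⟩, ht.trans hδT⟩
  have hτS : ∀ t ≤ δ, τ t ∈ S t := fun t ht => (hSclosed t).csInf_mem (hSne t ht) (hSbdd t)
  have hmono : Monotone fun t => τ (min t δ) := fun t t' htt' =>
    csInf_le_csInf (hSbdd _) (hSne _ (min_le_right _ _))
      fun x hx => ⟨hx.1, (min_le_min_right _ htt').trans hx.2⟩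
  refine ⟨fun t => γ (τ (min t δ)), hγ.measurable.comp hmono.measurable,
    fun t => ⟨_, (hτS _ (min_le_right _ _)).1, rfl⟩, fun t ht => ?_⟩
  simp only [min_eq_left ht.2]
  have hτt := hτS t ht.2
  obtain ⟨x, hx, hxt⟩ := intermediate_value_Icc (f := fun x => dist (γ x) (γ 0)) hτt.1.1
    (hγ.dist continuous_const).continuousOn
    (show t ∈ Icc _ _ from ⟨by simpa using ht.1, hτt.2⟩)
  have hτx : τ t ≤ x := csInf_le (hSbdd t) ⟨⟨hx.1, hx.2.trans hτt.1.2⟩, hxt.ge⟩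
  rwa [le_antisymm hx.2 hτx] at hxt

variable {K : Set ℂ} {s : ℝ → ℂ} {a z : ℂ} {δ : ℝ}

theorem le_logPotential (hK : IsCompact K) (hs : Measurable s) (hsK : ∀ t, s t ∈ K)
    (hδ : 0 < δ) (hsa : ∀ t ∈ Icc 0 δ, dist (s t) a = t) (hz : z ∉ K) :
    δ * (Real.log δ - 2) ≤ logPotential (volume.restrict (Ioc 0 δ)) s z := by
  refine (le_integral_log_sub (norm_nonneg (z - a)) hδ).trans ?_
  rw [intervalIntegral.integral_of_le hδ.le]
  have hint : IntervalIntegrable (fun t => Real.log (‖z - a‖ - t)) volume 0 δ := by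
    simpa using (intervalIntegral.intervalIntegrable_log' (a := ‖z - a‖ - 0)
      (b := ‖z - a‖ - δ)).comp_sub_left ‖z - a‖
  refine integral_mono_ae ((intervalIntegrable_iff_integrableOn_Ioc_of_le hδ.le).1 hint)
    (integrable_log_norm_sub hK hs hsK hz) ?_
  filter_upwards [ae_restrict_of_ae (volume.ae_ne ‖z - a‖), ae_restrict_mem measurableSet_Ioc]
    with t hta ht
  rw [← Real.log_abs]
  refine Real.log_le_log (abs_pos.2 (sub_ne_zero.2 hta.symm)) ?_
  have := abs_norm_sub_norm_le (z - a) (s t - a)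
  rwa [← dist_eq_norm (s t), hsa t ⟨ht.1.le, ht.2⟩, sub_sub_sub_cancel_right] at this

theorem logPotential_le (hK : IsCompact K) (hs : Measurable s) (hsK : ∀ t, s t ∈ K)
    (hδ : 0 ≤ δ) (hsa : ∀ t ∈ Icc 0 δ, dist (s t) a = t) (hz : z ∉ K) (hza : dist z a ≤ δ) :
    logPotential (volume.restrict (Ioc 0 δ)) s z ≤ δ * Real.log (2 * δ) := by
  have hconst : ∫ _ in Ioc 0 δ, Real.log (2 * δ) = δ * Real.log (2 * δ) := by simp [hδ]
  rw [← hconst]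
  refine integral_mono_ae (integrable_log_norm_sub hK hs hsK hz) (integrable_const _) ?_
  filter_upwards [ae_restrict_mem measurableSet_Ioc] with t ht
  have hst : s t ≠ z := fun heq => hz (heq ▸ hsK t)
  refine Real.log_le_log (norm_pos_iff.2 (sub_ne_zero.2 hst.symm)) ?_
  rw [← dist_eq_norm]
  linarith [dist_triangle_right z (s t) a, hsa t ⟨ht.1.le, ht.2⟩, ht.2]

theorem le_logPotential_of_le_dist (hK : IsCompact K) (hs : Measurable s) (hsK : ∀ t, s t ∈ K)
    (hδ : 0 ≤ δ) (hsa : ∀ t ∈ Icc 0 δ, dist (s t) a = t) (hz : z ∉ K) {R : ℝ} (hR : 0 < R)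
    (hza : R + δ ≤ dist z a) :
    δ * Real.log R ≤ logPotential (volume.restrict (Ioc 0 δ)) s z := by
  have hconst : ∫ _ in Ioc 0 δ, Real.log R = δ * Real.log R := by simp [hδ]
  rw [← hconst]
  refine integral_mono_ae (integrable_const _) (integrable_log_norm_sub hK hs hsK hz) ?_
  filter_upwards [ae_restrict_mem measurableSet_Ioc] with t ht
  refine Real.log_le_log hR ?_
  rw [← dist_eq_norm]
  linarith [dist_triangle z (s t) a, hsa t ⟨ht.1.le, ht.2⟩, ht.2]

-- The barrier is the mean of `log ‖· - s t‖` over points `s t` of the path with `dist (s t) a = t`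
-- for `t ≤ δ`, normalized by adding `2 - log δ`.
theorem exists_barrier {γ : ℝ → ℂ} (hγ : Continuous γ) {T : ℝ} (hT : 0 ≤ T) (hγT : γ T ≠ γ 0)
    {R : ℝ} (hR : 0 < R) (Λ : ℝ) :
    ∃ δ > 0, ∃ b : ℂ → ℝ, ContinuousOn b (γ '' Icc 0 T)ᶜ ∧
      (∀ z ∉ γ '' Icc 0 T, ∀ᶠ r in 𝓝[>] (0 : ℝ), circleAverage b z r ≤ b z) ∧
      (∀ z ∉ γ '' Icc 0 T, 0 ≤ b z) ∧
      (∀ z ∉ γ '' Icc 0 T, dist z (γ 0) ≤ δ → b z ≤ 3) ∧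
      (∀ z ∉ γ '' Icc 0 T, R ≤ dist z (γ 0) → Λ ≤ b z) := by
  have hK : IsCompact (γ '' Icc 0 T) := isCompact_Icc.image hγ
  obtain ⟨δ, hδ, hδT, hδR, hδΛ⟩ : ∃ δ > 0, δ ≤ dist (γ T) (γ 0) ∧ δ ≤ R / 2 ∧
      δ ≤ R / 2 * Real.exp (-Λ) :=
    ⟨min (dist (γ T) (γ 0)) (min (R / 2) (R / 2 * Real.exp (-Λ))),
      lt_min (dist_pos.2 hγT) (lt_min (by positivity) (by positivity)), min_le_left _ _,
      (min_le_right _ _).trans (min_le_left _ _), (min_le_right _ _).trans (min_le_right _ _)⟩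
  obtain ⟨s, hs, hsK, hsa⟩ := exists_measurable_dist_eq hγ hT hδT
  set P := logPotential (volume.restrict (Ioc 0 δ)) s
  have hPc : ContinuousOn P (γ '' Icc 0 T)ᶜ := continuousOn_logPotential hK hs hsK
  refine ⟨δ, hδ, fun z => δ⁻¹ * P z + (2 - Real.log δ), by fun_prop, fun z hz => ?_,
    fun z hz => ?_, fun z hz hzδ => ?_, fun z hz hzR => ?_⟩
  · filter_upwards [eventually_nhdsGT_closedBall_subset hK.isClosed.isOpen_compl hz,
      self_mem_nhdsWithin] with r hr (hr0 : 0 < r)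
    rw [← abs_of_pos hr0] at hr
    have hi : CircleIntegrable P z r :=
      (hPc.mono (sphere_subset_closedBall.trans hr)).circleIntegrable'
    have hi' : CircleIntegrable (fun w => δ⁻¹ * P w) z r := hi.const_mul _
    rw [Real.circleAverage_fun_add hi' (circleIntegrable_const _ _ _),
      Real.circleAverage_const, circleAverage_const_mul, circleAverage_logPotential hK hs hsK hr]
  · have := (le_inv_mul_iff₀ hδ).2 (le_logPotential hK hs hsK hδ hsa hz)
    linarith
  · have := (inv_mul_le_iff₀ hδ).2 (logPotential_le hK hs hsK hδ.le hsa hz hzδ)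
    rw [Real.log_mul two_ne_zero hδ.ne'] at this
    linarith [Real.log_two_lt_d9]
  · have := (le_inv_mul_iff₀ hδ).2
      (le_logPotential_of_le_dist hK hs hsK hδ.le hsa hz (half_pos hR) (by linarith))
    have hlog := Real.log_le_log hδ hδΛ
    rw [Real.log_mul (by positivity) (by positivity), Real.log_exp] at hlog
    linarith

-- The local comparison in which `u` is dominated by a multiple of the barrier of the path.
theorem exists_forall_isUnitSubharmonic_le {γ : ℝ → ℂ} (hγ : Continuous γ) {T : ℝ} (hT : 0 ≤ T)
    (hγT : γ T ≠ γ 0) {R : ℝ} (hR : 0 < R) {ε : ℝ} (hε : 0 < ε) :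
    ∃ r > 0, ∀ (V : Set ℂ) (u : ℂ → ℝ), IsOpen V → V ⊆ ball (γ 0) R → (∀ t, γ t ∉ V) →
      IsUnitSubharmonic u V → VanishesAt u V (frontier V ∩ ball (γ 0) R) →
      ∀ z ∈ V, dist z (γ 0) ≤ r → u z ≤ ε := by
  obtain ⟨r, hr, b, hbc, hbm, hb0, hb3, hbΛ⟩ := exists_barrier hγ hT hγT (half_pos hR) (3 / ε)
  refine ⟨r, hr, fun V u hV hVR hVγ hu hu0 z hz hzr => ?_⟩
  have hVK : V ⊆ (γ '' Icc 0 T)ᶜ := by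
    rintro x hx ⟨t, -, rfl⟩
    exact hVγ t hx
  have hle : u z ≤ ε / 3 * b z := by
    refine hu.le_of_frontier (h := fun z => ε / 3 * b z) hV (isBounded_ball.subset hVR)
      (continuousOn_const.mul (hbc.mono hVK)) (fun x hx => ?_) (fun x hx ε' hε' => ?_) hz
    · filter_upwards [hbm x (hVK hx)] with r hr
      rw [circleAverage_const_mul]
      gcongr
    · by_cases hxR : dist x (γ 0) < R
      · filter_upwards [hu0 x ⟨hx, hxR⟩ ε' hε', self_mem_nhdsWithin] with y hy hyV
        have : 0 ≤ ε / 3 * b y := mul_nonneg (by positivity) (hb0 y (hVK hyV))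
        linarith
      · have hfar : ∀ᶠ y in 𝓝[V] x, R / 2 < dist y (γ 0) :=
          (Continuous.continuousWithinAt (by fun_prop)).eventually_const_lt (by linarith)
        filter_upwards [hfar, self_mem_nhdsWithin] with y hy hyV
        have h1 : 1 ≤ ε / 3 * b y := by
          have := hbΛ y (hVK hyV) hy.le
          rw [div_le_iff₀ hε] at this
          linarith
        linarith [hu.le_one y hyV]
  have := mul_le_mul_of_nonneg_left (hb3 z (hVK hz) hzr) (by positivity : 0 ≤ ε / 3)
  linarith

/-- A bounded open set `D` and a relatively open part `A` of its boundary, each point of which is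
the starting point of a nonconstant path avoiding `D`. This is all that the extension theorem
needs to know about a Jordan domain. -/
structure ExteriorAccessible (D A : Set ℂ) : Prop where
  isOpen : IsOpen D
  isBounded : Bornology.IsBounded D
  exists_isOpen_inter : ∃ V, IsOpen V ∧ A = V ∩ frontier D
  exists_path : ∀ a ∈ A, ∃ γ : ℝ → ℂ, Continuous γ ∧ (∀ t, γ t ∉ D) ∧ γ 0 = a ∧ ∃ t > 0, γ t ≠ a

namespace ExteriorAccessible

variable {D A : Set ℂ}

theorem subset_frontier (h : ExteriorAccessible D A) : A ⊆ frontier D := by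
  obtain ⟨V, -, rfl⟩ := h.exists_isOpen_inter
  exact inter_subset_right

theorem subset_closure (h : ExteriorAccessible D A) : A ⊆ closure D :=
  h.subset_frontier.trans frontier_subset_closure

theorem exists_ball_subset (h : ExteriorAccessible D A) {a : ℂ} (ha : a ∈ A) :
    ∃ r > 0, frontier D ∩ ball a r ⊆ A := by
  obtain ⟨V, hV, rfl⟩ := h.exists_isOpen_inter
  obtain ⟨r, hr, hrV⟩ := Metric.isOpen_iff.1 hV a ha.1
  exact ⟨r, hr, fun x hx => ⟨hrV hx.2, hx.1⟩⟩

theorem isUnitSubharmonic_omegaC (h : ExteriorAccessible D A) :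
    IsUnitSubharmonic (omegaC A D) D :=
  _root_.isUnitSubharmonic_omegaC h.isOpen h.subset_closure

theorem vanishesAt_omegaC (h : ExteriorAccessible D A) : VanishesAt (omegaC A D) D A := by
  intro a ha ε hε
  obtain ⟨R, hR, hRA⟩ := h.exists_ball_subset ha
  obtain ⟨γ, hγ, hγD, rfl, T, hT, hγT⟩ := h.exists_path a ha
  obtain ⟨r, hr, hle⟩ := exists_forall_isUnitSubharmonic_le hγ hT.le hγT hR hε
  have hfun : ∀ z ∈ D, z ∈ ball (γ 0) R ∩ ball (γ 0) r → hFun A D z ≤ ε := by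
    intro z hz hzr
    refine hFun_le_of_forall h.isOpen fun v hv hvA => ?_
    refine hle (D ∩ ball (γ 0) R) v (h.isOpen.inter isOpen_ball) inter_subset_right
      (fun t ht => hγD t ht.1) (hv.mono inter_subset_left) (fun x hx ε' hε' => ?_) z
      ⟨hz, hzr.1⟩ hzr.2.le
    rw [frontier_inter_open_inter isOpen_ball] at hx
    exact (hvA x (hRA hx) ε' hε').filter_mono (nhdsWithin_mono _ inter_subset_left)
  have hball : ball (γ 0) R ∩ ball (γ 0) r ∈ 𝓝 (γ 0) :=
    inter_mem (ball_mem_nhds _ hR) (ball_mem_nhds _ hr)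
  filter_upwards [mem_nhdsWithin_of_mem_nhds hball, self_mem_nhdsWithin] with z hz hzD
  refine omegaC_le_of_eventually h.subset_closure hzD ?_
  filter_upwards [self_mem_nhdsWithin,
    mem_nhdsWithin_of_mem_nhds ((isOpen_ball.inter isOpen_ball).mem_nhds hz)] with y using hfun y

end ExteriorAccessible

end Barrier

section TwoConstants

open Real (circleAverage posLog)

variable {V D A : Set ℂ} {F : ℂ → ℂ} {s : ℝ} {z : ℂ}

theorem eventually_posLog_norm_le_circleAverage (hV : IsOpen V) (hF : DifferentiableOn ℂ F V)
    (hz : z ∈ V) :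
    ∀ᶠ r in 𝓝[>] (0 : ℝ), posLog ‖F z‖ ≤ circleAverage (fun w => posLog ‖F w‖) z r := by
  rcases le_or_gt ‖F z‖ 1 with hz1 | hz1
  · refine Eventually.of_forall fun r => ?_
    rw [(Real.posLog_eq_zero_iff _).2 (by rwa [abs_norm])]
    exact Real.circleAverage_nonneg_of_nonneg fun _ _ => Real.posLog_nonneg
  · have hne : V ∩ F ⁻¹' {0}ᶜ ∈ 𝓝 z :=
      (hF.continuousOn.isOpen_inter_preimage hV isOpen_compl_singleton).mem_nhds
        ⟨hz, norm_pos_iff.1 (zero_lt_one.trans hz1)⟩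
    filter_upwards [(eventually_closedBall_subset hne).filter_mono nhdsWithin_le_nhds,
      self_mem_nhdsWithin] with r hr (hr0 : 0 < r)
    rw [← abs_of_pos hr0] at hr
    have hsub : sphere z |r| ⊆ V ∩ F ⁻¹' {0}ᶜ := sphere_subset_closedBall.trans hr
    have hFc : ContinuousOn (fun w => ‖F w‖) (sphere z |r|) :=
      (hF.continuousOn.mono (hsub.trans inter_subset_left)).norm
    rw [Real.posLog_eq_log (by rw [abs_norm]; exact hz1.le),
      ← AnalyticOnNhd.circleAverage_log_norm_of_ne_zero
        ((hF.analyticOnNhd hV).mono (hr.trans inter_subset_left)) fun w hw => (hr hw).2]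
    refine Real.circleAverage_mono
      (hFc.log fun w hw => norm_ne_zero_iff.2 (hsub hw).2).circleIntegrable'
      (Real.continuous_posLog.comp_continuousOn hFc).circleIntegrable' fun w _ => ?_
    exact le_max_right _ _

theorem posLog_norm_le_of_le_exp (hs : 0 ≤ s) (h : ‖F z‖ ≤ Real.exp s) : posLog ‖F z‖ ≤ s :=
  (Real.posLog_le_posLog (norm_nonneg _) h).trans_eq
    (by rw [Real.posLog_apply, Real.log_exp, max_eq_right hs])

theorem isUnitSubharmonic_posLog_norm_div (hV : IsOpen V) (hF : DifferentiableOn ℂ F V)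
    (hs : 0 < s) (hFs : ∀ z ∈ V, ‖F z‖ ≤ Real.exp s) :
    IsUnitSubharmonic (fun z => s⁻¹ * posLog ‖F z‖) V where
  usc := (continuousOn_const.mul
    (Real.continuous_posLog.comp_continuousOn hF.continuousOn.norm)).upperSemicontinuousOn
  nonneg z _ := mul_nonneg (inv_nonneg.2 hs.le) Real.posLog_nonneg
  le_one z hz := (inv_mul_le_iff₀ hs).2 (by
    rw [mul_one]
    exact posLog_norm_le_of_le_exp hs.le (hFs z hz))
  le_circleAverage_small z hz := by
    filter_upwards [eventually_posLog_norm_le_circleAverage hV hF hz] with r hr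
    rw [circleAverage_const_mul]
    gcongr

theorem norm_le_exp_mul_omegaC (hD : IsOpen D) (hA : A ⊆ closure D) (hF : DifferentiableOn ℂ F D)
    (hs : 0 < s) (hFs : ∀ z ∈ D, ‖F z‖ ≤ Real.exp s)
    (hFA : ∀ a ∈ A, ∀ ε > 0, ∀ᶠ z in 𝓝[D] a, ‖F z‖ ≤ 1 + ε) (hz : z ∈ D) :
    ‖F z‖ ≤ Real.exp (s * omegaC A D z) := by
  have hvan : VanishesAt (fun z => s⁻¹ * posLog ‖F z‖) D A := by
    intro a ha ε hε
    filter_upwards [hFA a ha (s * ε) (by positivity)] with x hx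
    refine (inv_mul_le_iff₀ hs).2 (posLog_norm_le_of_le_exp (by positivity) ?_)
    linarith [Real.add_one_le_exp (s * ε)]
  have hle := (inv_mul_le_iff₀ hs).1
    ((isUnitSubharmonic_posLog_norm_div hD hF hs hFs).le_omegaC hvan hD hA hz)
  rcases eq_or_ne (F z) 0 with h0 | h0
  · rw [h0, norm_zero]
    positivity
  · exact (Real.log_le_iff_le_exp (norm_pos_iff.2 h0)).1 ((le_max_right _ _).trans hle)

theorem norm_le_two_constants (hD : IsOpen D) (hA : A ⊆ closure D) (hF : DifferentiableOn ℂ F D)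
    {M : ℝ} (hM : 0 < M) (hs : 0 < s) (hFM : ∀ z ∈ D, ‖F z‖ ≤ M)
    (hFA : ∀ a ∈ A, ∀ ε > 0, ∀ᶠ z in 𝓝[D] a, ‖F z‖ ≤ M * Real.exp (-s) + ε) (hz : z ∈ D) :
    ‖F z‖ ≤ M * Real.exp (-(s * (1 - omegaC A D z))) := by
  set c : ℝ := M * Real.exp (-s) with hc
  have hc0 : 0 < c := by positivity
  have hnorm : ∀ x, ‖(c : ℂ)⁻¹ * F x‖ = ‖F x‖ / c := fun x => by
    rw [norm_mul, norm_inv, Complex.norm_real, Real.norm_of_nonneg hc0.le, inv_mul_eq_div]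
  have hcM : Real.exp s * c = M := by
    rw [hc, mul_left_comm, ← Real.exp_add, add_neg_cancel, Real.exp_zero, mul_one]
  have hle := norm_le_exp_mul_omegaC (F := fun x => (c : ℂ)⁻¹ * F x) hD hA (hF.const_mul _) hs
    (fun x hx => by
      rw [hnorm, div_le_iff₀ hc0, hcM]
      exact hFM x hx)
    (fun a ha ε hε => by
      filter_upwards [hFA a ha (ε * c) (by positivity)] with x hx
      rw [hnorm, div_le_iff₀ hc0]
      linarith) hz
  rw [hnorm, div_le_iff₀ hc0] at hle
  refine hle.trans_eq ?_
  rw [hc, mul_left_comm, ← Real.exp_add]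
  ring_nf

end TwoConstants

section StrongMaximumPrinciple

open Real (circleAverage)

variable {u : ℂ → ℝ} {V : Set ℂ}

theorem circleAverage_lt_of_upperSemicontinuousOn {c : ℂ} {R a : ℝ} (hR : 0 < R)
    (hu : UpperSemicontinuousOn u (sphere c R)) (hi : CircleIntegrable u c R)
    (ha : ∀ z ∈ sphere c R, u z ≤ a) {w : ℂ} (hw : w ∈ sphere c R) (hwa : u w < a) :
    circleAverage u c R < a := by
  have hsph : ∀ θ, circleMap c R θ ∈ sphere c R := circleMap_mem_sphere c hR.le
  have hopen : IsOpen {θ | u (circleMap c R θ) < a} := isOpen_iff_mem_nhds.2 fun θ hθ =>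
    (tendsto_nhdsWithin_iff.2 ⟨(continuous_circleMap c R).tendsto θ,
      Eventually.of_forall hsph⟩).eventually (hu _ (hsph θ) a hθ)
  obtain ⟨θ₀, hθ₀, rfl⟩ : w ∈ circleMap c R '' Ioc 0 (2 * π) := by
    rwa [image_circleMap_Ioc, abs_of_pos hR]
  obtain ⟨θ₁, hθ₁⟩ : ({θ | u (circleMap c R θ) < a} ∩ Ioo 0 (2 * π)).Nonempty := by
    refine mem_closure_iff.1 ?_ _ hopen hwa
    rw [closure_Ioo Real.two_pi_pos.ne]
    exact Ioc_subset_Icc_self hθ₀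
  have hpos := (hopen.inter isOpen_Ioo).measure_pos volume ⟨θ₁, hθ₁⟩
  have hlt := intervalIntegral.integral_lt_integral_of_ae_le_of_measure_setOfPred_lt_ne_zero
    Real.two_pi_pos.le hi (intervalIntegrable_const (c := a))
    (Eventually.of_forall fun θ => ha _ (hsph θ)) ?_
  · rw [intervalIntegral.integral_const, sub_zero, smul_eq_mul] at hlt
    rwa [Real.circleAverage_def, smul_eq_mul, inv_mul_lt_iff₀ Real.two_pi_pos]
  · rw [Measure.restrict_apply' measurableSet_Ioc]
    exact (hpos.trans_le (measure_mono (inter_subset_inter_right _ Ioo_subset_Ioc_self))).ne'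

theorem IsUnitSubharmonic.isOpen_setOf_eq_one (hu : IsUnitSubharmonic u V) (hV : IsOpen V) :
    IsOpen {x ∈ V | u x = 1} := by
  refine isOpen_iff_mem_nhds.2 fun x ⟨hx, hx1⟩ => ?_
  obtain ⟨R, hR, hRV⟩ := Metric.isOpen_iff.1 hV x hx
  filter_upwards [ball_mem_nhds x hR] with y hy
  refine ⟨hRV hy, (hu.le_one y (hRV hy)).eq_of_not_lt fun hlt => ?_⟩
  have hd : 0 < dist y x := dist_pos.2 fun h => hlt.ne (h ▸ hx1)
  have hcb : closedBall x (dist y x) ⊆ V := (closedBall_subset_ball hy).trans hRV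
  have hs := sphere_subset_closedBall.trans hcb
  refine (circleAverage_lt_of_upperSemicontinuousOn hd (hu.usc.mono hs)
    (hu.circleIntegrable (by rwa [abs_of_pos hd])) (fun w hw => hu.le_one w (hs hw))
    (mem_sphere.2 rfl) hlt).not_ge ?_
  rw [← hx1]
  exact hu.le_circleAverage hd hcb

end StrongMaximumPrinciple

section Sublevel

open Real (circleAverage)

/-- The sublevel set of the extremal function `ω(·, A, D)` in `D`. -/
def omegaSublevel (A D : Set ℂ) (c : ℝ) : Set ℂ :=
  {z ∈ D | omegaC A D z < c}

theorem omegaSublevel_subset (A D : Set ℂ) (c : ℝ) : omegaSublevel A D c ⊆ D :=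
  sep_subset _ _

theorem mem_connectedComponentIn_of_mem_closure {X : Type*} [TopologicalSpace X] {U : Set X}
    {x y : X} (hy : y ∈ U) (hyc : y ∈ closure (connectedComponentIn U x)) :
    y ∈ connectedComponentIn U x := by
  have hpre : IsPreconnected (insert y (connectedComponentIn U x)) :=
    isPreconnected_connectedComponentIn.subset_closure (subset_insert _ _)
      (insert_subset hyc subset_closure)
  obtain ⟨w, hw⟩ := closure_nonempty_iff.1 ⟨y, hyc⟩
  rw [connectedComponentIn_eq hw] at hpre ⊢
  exact hpre.subset_connectedComponentIn (mem_insert_of_mem _ (connectedComponentIn_eq hw ▸ hw))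
    (insert_subset hy (connectedComponentIn_subset _ _)) (mem_insert _ _)

open Classical in
theorem IsUnitSubharmonic.piecewise_const {u : ℂ → ℝ} {V U : Set ℂ} (hu : IsUnitSubharmonic u V)
    (hV : IsOpen V) (hU : IsOpen U) {c : ℝ} (hc1 : c ≤ 1) (huU : ∀ z ∈ U, u z ≤ c)
    (hcu : ∀ z ∈ V, z ∈ closure U → z ∉ U → c ≤ u z) :
    IsUnitSubharmonic (U.piecewise (fun _ => c) u) V := by
  have hle : ∀ z, U.piecewise (fun _ => c) u z ≤ max (u z) c := fun z => by
    by_cases hz : z ∈ U <;> simp [hz]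
  have hge : u ≤ U.piecewise (fun _ => c) u := le_piecewise huU fun _ _ => le_rfl
  have hnonneg : ∀ z ∈ V, 0 ≤ U.piecewise (fun _ => c) u z := fun z hz =>
    (hu.nonneg z hz).trans (hge z)
  have hle_one : ∀ z ∈ V, U.piecewise (fun _ => c) u z ≤ 1 := fun z hz =>
    (hle z).trans (max_le (hu.le_one z hz) hc1)
  have husc : UpperSemicontinuousOn (U.piecewise (fun _ => c) u) V := by
    intro z hz d hd
    by_cases hzU : z ∈ U
    · filter_upwards [mem_nhdsWithin_of_mem_nhds (hU.mem_nhds hzU)] with y hy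
      simpa [hy, hzU] using hd
    · rw [piecewise_eq_of_notMem _ _ _ hzU] at hd
      by_cases hzc : z ∈ closure U
      · filter_upwards [hu.usc z hz d hd] with y hy
        exact (hle y).trans_lt (max_lt hy ((hcu z hz hzc hzU).trans_lt hd))
      · filter_upwards [hu.usc z hz d hd,
          mem_nhdsWithin_of_mem_nhds (isClosed_closure.isOpen_compl.mem_nhds hzc)] with y hy hyc
        rwa [piecewise_eq_of_notMem _ _ _ fun hyU => hyc (subset_closure hyU)]
  refine ⟨husc, hnonneg, hle_one, fun z hz => ?_⟩
  by_cases hzU : z ∈ U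
  · filter_upwards [eventually_nhdsGT_closedBall_subset hU hzU, self_mem_nhdsWithin]
      with r hr (hr0 : 0 < r)
    rw [Real.circleAverage_congr_sphere (f₂ := fun _ => c) fun y hy => piecewise_eq_of_mem _ _ _
      (hr (sphere_abs_subset_closedBall hr0.le hy)), Real.circleAverage_const,
      piecewise_eq_of_mem _ _ _ hzU]
  · filter_upwards [hu.le_circleAverage_small z hz, eventually_nhdsGT_closedBall_subset hV hz,
      self_mem_nhdsWithin] with r hr hrV (hr0 : 0 < r)
    have hs : sphere z |r| ⊆ V := (sphere_abs_subset_closedBall hr0.le).trans hrV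
    rw [piecewise_eq_of_notMem _ _ _ hzU]
    refine hr.trans (Real.circleAverage_mono (hu.circleIntegrable hs)
      (circleIntegrable_of_norm_le (C := 1)
        (measurable_comp_circleMap_of_upperSemicontinuousOn husc hs) fun y hy => ?_)
      fun y _ => hge y)
    rw [Real.norm_of_nonneg (hnonneg y (hs hy))]
    exact hle_one y (hs hy)

namespace ExteriorAccessible

variable {D A : Set ℂ}

theorem isOpen_omegaSublevel (h : ExteriorAccessible D A) (c : ℝ) :
    IsOpen (omegaSublevel A D c) := by
  refine isOpen_iff_mem_nhds.2 fun x ⟨hx, hxc⟩ => ?_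
  have hev := h.isUnitSubharmonic_omegaC.usc x hx c hxc
  rw [h.isOpen.nhdsWithin_eq hx] at hev
  filter_upwards [hev, h.isOpen.mem_nhds hx] with y hy hyD using ⟨hyD, hy⟩

-- Otherwise raising `ω` to `c` on the component would give a larger competitor.
theorem exists_mem_closure_connectedComponentIn (h : ExteriorAccessible D A) {c : ℝ} (hc1 : c ≤ 1)
    {z : ℂ} (hz : z ∈ omegaSublevel A D c) :
    ∃ a ∈ A, a ∈ closure (connectedComponentIn (omegaSublevel A D c) z) := by
  classical
  set U := connectedComponentIn (omegaSublevel A D c) z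
  by_contra! hcon
  have hω := h.isUnitSubharmonic_omegaC
  have hUs : U ⊆ omegaSublevel A D c := connectedComponentIn_subset _ _
  have hv := hω.piecewise_const (U := U) h.isOpen (h.isOpen_omegaSublevel c).connectedComponentIn
    hc1 (fun x hx => (hUs hx).2.le) fun x hx hxc hxU =>
      not_lt.1 fun hlt => hxU (mem_connectedComponentIn_of_mem_closure ⟨hx, hlt⟩ hxc)
  have hvA : VanishesAt (U.piecewise (fun _ => c) (omegaC A D)) D A := by
    intro a ha ε hε
    filter_upwards [h.vanishesAt_omegaC a ha ε hε,
      mem_nhdsWithin_of_mem_nhds (isClosed_closure.isOpen_compl.mem_nhds (hcon a ha))] with x hx hxc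
    rwa [piecewise_eq_of_notMem _ _ _ fun hxU => hxc (_root_.subset_closure hxU)]
  have hle := hv.le_omegaC hvA h.isOpen h.subset_closure hz.1
  rw [piecewise_eq_of_mem _ _ _ (mem_connectedComponentIn hz)] at hle
  exact hz.2.not_ge hle

theorem mono (h : ExteriorAccessible D A) {V A' : Set ℂ} (hV : IsOpen V) (hVD : V ⊆ D)
    (hA' : ∃ N, IsOpen N ∧ A' = N ∩ frontier V) (hA'A : A' ⊆ A) : ExteriorAccessible V A' where
  isOpen := hV
  isBounded := h.isBounded.subset hVD
  exists_isOpen_inter := hA'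
  exists_path a ha := by
    obtain ⟨γ, hγ, hγD, hγa⟩ := h.exists_path a (hA'A ha)
    exact ⟨γ, hγ, fun t ht => hγD t (hVD ht), hγa⟩

theorem eq_zero_of_tendsto (h : ExteriorAccessible D A) {d : ℂ → ℂ} (hd : DifferentiableOn ℂ d D)
    (hd1 : ∀ z ∈ D, ‖d z‖ ≤ 1) (hdA : ∀ a ∈ A, Tendsto d (𝓝[D] a) (𝓝 0)) {z : ℂ} (hz : z ∈ D)
    (hωz : omegaC A D z < 1) : d z = 0 := by
  have hle : ∀ᶠ s : ℝ in atTop, ‖d z‖ ≤ 1 * Real.exp (-(s * (1 - omegaC A D z))) := by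
    filter_upwards [eventually_gt_atTop 0] with s hs
    refine norm_le_two_constants h.isOpen h.subset_closure hd one_pos hs hd1
      (fun a ha ε hε => ?_) hz
    have hpos : (0 : ℝ) < 1 * Real.exp (-s) + ε := by positivity
    filter_upwards [(tendsto_zero_iff_norm_tendsto_zero.1 (hdA a ha)).eventually (gt_mem_nhds hpos)]
      with x hx using hx.le
  have hlim : Tendsto (fun s : ℝ => 1 * Real.exp (-(s * (1 - omegaC A D z)))) atTop (𝓝 0) := by
    simp only [one_mul]
    exact Real.tendsto_exp_neg_atTop_nhds_zero.comp
      (tendsto_id.atTop_mul_const (sub_pos.2 hωz))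
  exact norm_le_zero_iff.1 (ge_of_tendsto hlim hle)

theorem eventually_eq_zero_of_tendsto (h : ExteriorAccessible D A) {U : Set ℂ} (hU : IsOpen U)
    (hUD : U ⊆ D) {d : ℂ → ℂ} (hd : DifferentiableOn ℂ d U)
    (hdA : ∀ a ∈ A, Tendsto d (𝓝[U] a) (𝓝 0)) {a : ℂ} (ha : a ∈ A) (haU : a ∈ closure U)
    (hUa : ∀ᶠ x in 𝓝[D] a, x ∈ closure U → x ∈ U) : ∀ᶠ x in 𝓝[U] a, d x = 0 := by
  have hd1 : ∀ᶠ x in 𝓝[U] a, ‖d x‖ < 1 :=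
    (tendsto_zero_iff_norm_tendsto_zero.1 (hdA a ha)).eventually (gt_mem_nhds one_pos)
  obtain ⟨R₁, hR₁, hRA⟩ := h.exists_ball_subset ha
  obtain ⟨R₂, hR₂, hRU⟩ := Metric.mem_nhdsWithin_iff.1 hUa
  obtain ⟨R₃, hR₃, hRd⟩ := Metric.mem_nhdsWithin_iff.1 hd1
  set R := min R₁ (min R₂ R₃)
  have hR : 0 < R := lt_min hR₁ (lt_min hR₂ hR₃)
  have hfr : frontier U ∩ ball a R ⊆ A := by
    rw [hU.frontier_eq]
    rintro x ⟨⟨hxc, hxU⟩, hxR⟩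
    have hxD : x ∉ D := fun hxD => hxU
      (hRU ⟨ball_subset_ball ((min_le_right _ _).trans (min_le_left _ _)) hxR, hxD⟩ hxc)
    refine hRA ⟨?_, ball_subset_ball (min_le_left _ _) hxR⟩
    rw [h.isOpen.frontier_eq]
    exact ⟨closure_mono hUD hxc, hxD⟩
  have hV : ExteriorAccessible (U ∩ ball a R) (frontier U ∩ ball a R) :=
    h.mono (hU.inter isOpen_ball) (inter_subset_left.trans hUD) ⟨ball a R, isOpen_ball, by
      rw [inter_comm (ball a R), frontier_inter_open_inter isOpen_ball]⟩ hfr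
  have haV : a ∈ frontier U ∩ ball a R := by
    rw [hU.frontier_eq]
    exact ⟨⟨haU, fun haU' => (h.isOpen.frontier_eq ▸ h.subset_frontier ha).2 (hUD haU')⟩,
      mem_ball_self hR⟩
  have hω := hV.vanishesAt_omegaC a haV (1 / 2) one_half_pos
  rw [nhdsWithin_inter_of_mem' (mem_nhdsWithin_of_mem_nhds (ball_mem_nhds a hR))] at hω
  filter_upwards [hω, self_mem_nhdsWithin, mem_nhdsWithin_of_mem_nhds (ball_mem_nhds a hR)]
    with x hx hxU hxR
  refine hV.eq_zero_of_tendsto (hd.mono inter_subset_left) (fun y hy => ?_) (fun y hy => ?_)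
    ⟨hxU, hxR⟩ (hx.trans_lt one_half_lt_one)
  · exact le_of_lt (hRd ⟨ball_subset_ball ((min_le_right _ _).trans (min_le_right _ _)) hy.2, hy.1⟩)
  · exact (hdA y (hfr hy)).mono_left (nhdsWithin_mono _ inter_subset_left)

theorem eqOn_zero_omegaSublevel (h : ExteriorAccessible D A) {c : ℝ} (hc0 : 0 < c) (hc1 : c ≤ 1)
    {d : ℂ → ℂ} (hd : DifferentiableOn ℂ d (omegaSublevel A D c))
    (hdA : ∀ a ∈ A, Tendsto d (𝓝[omegaSublevel A D c] a) (𝓝 0)) :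
    EqOn d 0 (omegaSublevel A D c) := by
  intro z hz
  obtain ⟨a, ha, haU⟩ := h.exists_mem_closure_connectedComponentIn hc1 hz
  set U := connectedComponentIn (omegaSublevel A D c) z
  have hU : IsOpen U := (h.isOpen_omegaSublevel c).connectedComponentIn
  have hUs : U ⊆ omegaSublevel A D c := connectedComponentIn_subset _ _
  have hzero : ∀ᶠ x in 𝓝[U] a, d x = 0 := by
    refine h.eventually_eq_zero_of_tendsto hU (hUs.trans (omegaSublevel_subset A D c)) (hd.mono hUs)
      (fun b hb => (hdA b hb).mono_left (nhdsWithin_mono _ hUs)) ha haU ?_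
    filter_upwards [h.vanishesAt_omegaC a ha (c / 2) (half_pos hc0), self_mem_nhdsWithin]
      with x hx hxD hxc
    exact mem_connectedComponentIn_of_mem_closure ⟨hxD, by linarith⟩ hxc
  have : (𝓝[U] a).NeBot := mem_closure_iff_nhdsWithin_neBot.1 haU
  obtain ⟨y, hy, hyU⟩ := ((eventually_eventually_nhdsWithin.2 hzero).and self_mem_nhdsWithin).exists
  rw [hU.nhdsWithin_eq hyU] at hy
  exact ((hd.mono hUs).analyticOnNhd hU).eqOn_zero_of_preconnected_of_eventuallyEq_zero
    isPreconnected_connectedComponentIn hyU hy (mem_connectedComponentIn hz)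

end ExteriorAccessible

end Sublevel

section Exhaustion

open Real (circleAverage)

open Classical in
/-- The extension of `u` from `V` to `ℂ` by the value `1`. -/
def extendByOne (u : ℂ → ℝ) (V : Set ℂ) : ℂ → ℝ := V.piecewise u 1

theorem extendByOne_of_mem {u : ℂ → ℝ} {V : Set ℂ} {z : ℂ} (hz : z ∈ V) :
    extendByOne u V z = u z := by
  simp [extendByOne, hz]

theorem extendByOne_of_notMem {u : ℂ → ℝ} {V : Set ℂ} {z : ℂ} (hz : z ∉ V) :
    extendByOne u V z = 1 := by
  simp [extendByOne, hz]

variable {u : ℕ → ℂ → ℝ} {V : ℕ → Set ℂ}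

theorem IsUnitSubharmonic.upperSemicontinuous_extendByOne {u : ℂ → ℝ} {V : Set ℂ}
    (hu : IsUnitSubharmonic u V) (hV : IsOpen V) : UpperSemicontinuous (extendByOne u V) := by
  intro z d hd
  by_cases hz : z ∈ V
  · rw [extendByOne_of_mem hz] at hd
    have hev := hu.usc z hz d hd
    rw [hV.nhdsWithin_eq hz] at hev
    filter_upwards [hev, hV.mem_nhds hz] with y hy hyV
    rwa [extendByOne_of_mem hyV]
  · rw [extendByOne_of_notMem hz] at hd
    refine Eventually.of_forall fun y => lt_of_le_of_lt ?_ hd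
    by_cases hy : y ∈ V
    · rw [extendByOne_of_mem hy]
      exact hu.le_one y hy
    · exact (extendByOne_of_notMem hy).le

theorem IsUnitSubharmonic.extendByOne_mem_Icc {u : ℂ → ℝ} {V : Set ℂ}
    (hu : IsUnitSubharmonic u V) (z : ℂ) : extendByOne u V z ∈ Icc (0 : ℝ) 1 := by
  by_cases hz : z ∈ V
  · rw [extendByOne_of_mem hz]
    exact ⟨hu.nonneg z hz, hu.le_one z hz⟩
  · rw [extendByOne_of_notMem hz]
    exact ⟨zero_le_one, le_rfl⟩

theorem antitone_extendByOne (hu : ∀ j, IsUnitSubharmonic (u j) (V j)) (hV : Monotone V)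
    (hanti : ∀ i j, i ≤ j → ∀ z ∈ V i, u j z ≤ u i z) (z : ℂ) :
    Antitone fun j => extendByOne (u j) (V j) z := by
  intro i j hij
  by_cases hz : z ∈ V i
  · simpa [extendByOne_of_mem hz, extendByOne_of_mem (hV hij hz)] using hanti i j hij z hz
  · simpa [extendByOne_of_notMem hz] using ((hu j).extendByOne_mem_Icc z).2

theorem IsUnitSubharmonic.iInf_extendByOne (hu : ∀ j, IsUnitSubharmonic (u j) (V j))
    (hVo : ∀ j, IsOpen (V j)) (hV : Monotone V)
    (hanti : ∀ i j, i ≤ j → ∀ z ∈ V i, u j z ≤ u i z) :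
    IsUnitSubharmonic (fun z => ⨅ j, extendByOne (u j) (V j) z) (⋃ j, V j) := by
  have hIcc := fun j z => (hu j).extendByOne_mem_Icc z
  have hbdd : ∀ z, BddBelow (range fun j => extendByOne (u j) (V j) z) := fun z =>
    ⟨0, forall_mem_range.2 fun j => (hIcc j z).1⟩
  refine ⟨fun z _ d hd => ?_, fun z _ => le_ciInf fun j => (hIcc j z).1,
    fun z _ => (ciInf_le (hbdd z) 0).trans (hIcc 0 z).2, fun z hz => ?_⟩
  · obtain ⟨j, hj⟩ := exists_lt_of_ciInf_lt hd
    exact (((hu j).upperSemicontinuous_extendByOne (hVo j) z d hj).mono fun y hy =>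
      (ciInf_le (hbdd y) j).trans_lt hy).filter_mono nhdsWithin_le_nhds
  · filter_upwards [eventually_nhdsGT_closedBall_subset (isOpen_iUnion hVo) hz, self_mem_nhdsWithin]
      with r hr (hr0 : 0 < r)
    obtain ⟨J, hJ⟩ := (isCompact_closedBall z r).elim_directed_cover V hVo hr hV.directed_le
    refine ge_of_tendsto (tendsto_circleAverage_of_norm_le (C := 1)
      (fun j => measurable_comp_circleMap_of_upperSemicontinuousOn
        (((hu j).upperSemicontinuous_extendByOne (hVo j)).upperSemicontinuousOn _) subset_rfl)
      (fun j y _ => (Real.norm_of_nonneg (hIcc j y).1).trans_le (hIcc j y).2)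
      fun y _ => tendsto_atTop_ciInf (antitone_extendByOne hu hV hanti y) (hbdd y)) ?_
    filter_upwards [eventually_ge_atTop J] with j hj
    have hrj : closedBall z r ⊆ V j := hJ.trans (hV hj)
    rw [Real.circleAverage_congr_sphere (f₂ := u j) fun y hy => extendByOne_of_mem
      (hrj (sphere_abs_subset_closedBall hr0.le hy))]
    refine (ciInf_le (hbdd z) j).trans ?_
    rw [extendByOne_of_mem (hrj (mem_closedBall_self hr0.le))]
    exact (hu j).le_circleAverage hr0 hrj

namespace ExteriorAccessible

variable {D A : Set ℂ}

theorem omegaC_anti (h : ExteriorAccessible D A) {V A' : Set ℂ} (h' : ExteriorAccessible V A')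
    (hVD : V ⊆ D) (hA : A' ⊆ A) {z : ℂ} (hz : z ∈ V) : omegaC A D z ≤ omegaC A' V z :=
  (h.isUnitSubharmonic_omegaC.mono hVD).le_omegaC (fun a ha ε hε =>
    (h.vanishesAt_omegaC a (hA ha) ε hε).filter_mono (nhdsWithin_mono _ hVD)) h'.isOpen
    h'.subset_closure hz

theorem inter (h : ExteriorAccessible D A) {N : Set ℂ} (hN : IsOpen N) :
    ExteriorAccessible (D ∩ N) (A ∩ N) := by
  refine h.mono (h.isOpen.inter hN) inter_subset_left ?_ inter_subset_left
  obtain ⟨V, hV, rfl⟩ := h.exists_isOpen_inter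
  refine ⟨V ∩ N, hV.inter hN, ?_⟩
  rw [inter_assoc, inter_assoc, inter_comm N, frontier_inter_open_inter hN]

end ExteriorAccessible

/-- An increasing sequence of open sets `N j` covering `D ∪ A`, each of which stays away from
`∂D \ A`. -/
structure IsExhaustion (N : ℕ → Set ℂ) (D A : Set ℂ) : Prop where
  monotone : Monotone N
  isOpen : ∀ j, IsOpen (N j)
  subset_iUnion : D ∪ A ⊆ ⋃ j, N j
  closure_inter_closure_subset : ∀ j, closure (N j) ∩ closure D ⊆ D ∪ A

theorem ExteriorAccessible.exists_isExhaustion {D A : Set ℂ} (h : ExteriorAccessible D A) :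
    ∃ N, IsExhaustion N D A := by
  have hclosed : IsClosed (frontier D \ A) := by
    obtain ⟨V, hV, rfl⟩ := h.exists_isOpen_inter
    rw [sdiff_inter_self_eq_sdiff]
    exact isClosed_frontier.sdiff hV
  have hpos : ∀ j : ℕ, (0 : ℝ) < 1 / (j + 1) := fun j => by positivity
  refine ⟨fun j => (cthickening (1 / ((j : ℝ) + 1)) (frontier D \ A))ᶜ, fun i j hij => ?_,
    fun j => isClosed_cthickening.isOpen_compl, ?_, fun j x hx => ?_⟩
  · refine compl_subset_compl.2 (cthickening_mono ?_ _)
    gcongr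
  · intro x hx
    have hxF : x ∉ closure (frontier D \ A) := by
      rw [hclosed.closure_eq, h.isOpen.frontier_eq]
      exact fun hxF => hx.elim hxF.1.2 hxF.2
    simp only [closure_eq_iInter_cthickening, mem_iInter, not_forall] at hxF
    obtain ⟨δ, hδ, hxδ⟩ := hxF
    obtain ⟨j, hj⟩ := exists_nat_one_div_lt hδ
    exact mem_iUnion.2 ⟨j, fun hxj => hxδ (cthickening_mono hj.le _ hxj)⟩
  · by_contra hxA
    have hxF : x ∈ frontier D \ A := by
      rw [h.isOpen.frontier_eq]
      exact ⟨⟨hx.2, fun hxD => hxA (Or.inl hxD)⟩, fun hxA' => hxA (Or.inr hxA')⟩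
    obtain ⟨y, hy, hyj⟩ := mem_closure_iff.1 hx.1 _ isOpen_thickening
      (self_subset_thickening (hpos j) _ hxF)
    exact hyj (thickening_subset_cthickening _ _ hy)

namespace IsExhaustion

variable {N : ℕ → Set ℂ} {D A : Set ℂ} {a z : ℂ}

theorem eventually_mem (hN : IsExhaustion N D A) (hz : z ∈ D ∪ A) : ∀ᶠ j in atTop, z ∈ N j := by
  obtain ⟨J, hJ⟩ := mem_iUnion.1 (hN.subset_iUnion hz)
  filter_upwards [eventually_ge_atTop J] with j hj using hN.monotone hj hJ

theorem eventually_mem_omegaSublevel (hN : IsExhaustion N D A) (h : ExteriorAccessible D A) {c : ℝ}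
    (hz : z ∈ omegaSublevel A D c) :
    ∀ᶠ j in atTop, z ∈ omegaSublevel (A ∩ N j) (D ∩ N j) c := by
  have hj := fun j => h.inter (hN.isOpen j)
  have hmono : Monotone fun j => D ∩ N j := fun i j hij =>
    inter_subset_inter_right _ (hN.monotone hij)
  have hanti : ∀ i j, i ≤ j → ∀ z ∈ D ∩ N i,
      omegaC (A ∩ N j) (D ∩ N j) z ≤ omegaC (A ∩ N i) (D ∩ N i) z := fun i j hij z hz =>
    (hj j).omegaC_anti (hj i) (hmono hij) (inter_subset_inter_right _ (hN.monotone hij)) hz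
  have hω := fun j => (hj j).isUnitSubharmonic_omegaC
  have hW := IsUnitSubharmonic.iInf_extendByOne hω (fun j => (hj j).isOpen) hmono hanti
  rw [← inter_iUnion, inter_eq_left.2 (subset_union_left.trans hN.subset_iUnion)] at hW
  set w : ℕ → ℂ → ℝ := fun j => extendByOne (omegaC (A ∩ N j) (D ∩ N j)) (D ∩ N j)
  have hWA : VanishesAt (fun x => ⨅ j, w j x) D A := by
    intro a ha ε hε
    obtain ⟨j, hja⟩ := (hN.eventually_mem (Or.inr ha)).exists
    have hev := (hj j).vanishesAt_omegaC a ⟨ha, hja⟩ ε hε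
    rw [nhdsWithin_inter_of_mem' (mem_nhdsWithin_of_mem_nhds ((hN.isOpen j).mem_nhds hja))] at hev
    filter_upwards [hev, self_mem_nhdsWithin,
      mem_nhdsWithin_of_mem_nhds ((hN.isOpen j).mem_nhds hja)] with x hx hxD hxj
    refine (ciInf_le ⟨0, forall_mem_range.2 fun i => ((hω i).extendByOne_mem_Icc x).1⟩ j).trans ?_
    exact (extendByOne_of_mem (mem_inter hxD hxj)).trans_le hx
  obtain ⟨i, hi⟩ := exists_lt_of_ciInf_lt
    ((hW.le_omegaC hWA h.isOpen h.subset_closure hz.1).trans_lt hz.2)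
  filter_upwards [eventually_ge_atTop i, hN.eventually_mem (Or.inl hz.1)] with j hij hzj
  refine ⟨⟨hz.1, hzj⟩, ?_⟩
  rw [← extendByOne_of_mem (u := omegaC _ _) (mem_inter hz.1 hzj)]
  exact (antitone_extendByOne hω hmono hanti z hij).trans_lt hi

end IsExhaustion

end Exhaustion

section Duality

open scoped Pointwise

variable {E X : Type*} [NormedAddCommGroup E] [NormedSpace ℂ E]

theorem exists_norm_lt_one_of_balanced {C : Set E} (hC : Balanced ℂ C)
    (hconv : Convex ℝ C) (hopen : IsOpen C) (h0 : 0 ∈ C) {φ : E} (hφ : φ ∉ C) :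
    ∃ l : E →L[ℂ] ℂ, (∀ x ∈ C, ‖l x‖ < 1) ∧ 1 ≤ ‖l φ‖ := by
  obtain ⟨l, hlφ, hl⟩ := RCLike.separate_convex_open_set (𝕜 := ℂ) h0 hconv hopen hφ
  refine ⟨l, fun x hx => ?_, hlφ.symm.trans_le (re_le_norm _)⟩
  obtain ⟨c, hc, hcx⟩ := RCLike.exists_norm_eq_mul_self (l x)
  have hlt := hl (c • x) (hC.smul_mem hc.le hx)
  rw [map_smul, smul_eq_mul, ← hcx] at hlt
  exact hlt

variable [NormedAddCommGroup X] [NormedSpace ℂ X]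

theorem exists_norm_le_norm_sub_lt (r : X →L[ℂ] E) (φ : E) {a b : ℝ} (ha : 0 < a) (hb : 0 < b)
    (h : ∀ l : E →L[ℂ] ℂ, ‖l‖ ≤ 1 / a → ‖l.comp r‖ ≤ 1 / b → ‖l φ‖ < 1) :
    ∃ x, ‖x‖ ≤ b ∧ ‖φ - r x‖ < a := by
  set C : Set E := r '' closedBall 0 b + ball 0 a
  have hrC : ∀ x ∈ closedBall (0 : X) b, r x ∈ C := fun x hx =>
    ⟨r x, mem_image_of_mem r hx, 0, mem_ball_self ha, add_zero _⟩
  have hbC : ball (0 : E) a ⊆ C := fun e he =>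
    ⟨0, ⟨0, mem_closedBall_self hb.le, map_zero r⟩, e, he, zero_add e⟩
  have hconv : Convex ℝ C :=
    ((convex_closedBall (0 : X) b).linear_image
      ((r.restrictScalars ℝ : X →L[ℝ] E) : X →ₗ[ℝ] E)).add (convex_ball 0 a)
  have hbal : Balanced ℂ C := by
    refine Balanced.add (fun c hc => ?_) balanced_ball_zero
    rw [← image_smul_set]
    exact image_mono (balanced_closedBall_zero c hc)
  suffices φ ∈ C by
    obtain ⟨_, ⟨x, hx, rfl⟩, e, he, rfl⟩ := this
    exact ⟨x, mem_closedBall_zero_iff.1 hx, by simpa using he⟩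
  by_contra hφ
  obtain ⟨l, hlC, hlφ⟩ := exists_norm_lt_one_of_balanced hbal hconv isOpen_ball.add_left
    (hbC (mem_ball_self ha)) hφ
  refine hlφ.not_gt (h l (l.opNorm_bound_of_ball_bound ha 1 ?_)
    ((l.comp r).opNorm_bound_of_ball_bound hb 1 fun x hx => (hlC _ (hrC x hx)).le))
  rw [← closure_ball (0 : E) ha.ne']
  exact closure_minimal (fun e he => (hlC e (hbC he)).le)
    (isClosed_le l.continuous.norm continuous_const)

theorem exists_continuousLinearMap_comp_eq (J : X →ₗ[ℂ] E) (T : X →ₗ[ℂ] ℂ)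
    (h : ∀ x, ‖T x‖ ≤ ‖J x‖) : ∃ g : E →L[ℂ] ℂ, ‖g‖ ≤ 1 ∧ ∀ x, g (J x) = T x := by
  have hker : J.ker ≤ T.ker := fun x hx => by
    simpa [LinearMap.mem_ker.1 hx] using h x
  let S : J.range →ₗ[ℂ] ℂ := J.ker.liftQ T hker ∘ₗ J.quotKerEquivRange.symm
  have hS : ∀ x, S (J.rangeRestrict x) = T x := fun x => by
    have : J.quotKerEquivRange.symm (J.rangeRestrict x) = J.ker.mkQ x :=
      (LinearEquiv.symm_apply_eq _).2 rfl
    simp [S, this]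
  have hSn : ∀ y, ‖S y‖ ≤ 1 * ‖y‖ := fun y => by
    obtain ⟨x, rfl⟩ := J.surjective_rangeRestrict y
    rw [hS, one_mul]
    exact h x
  obtain ⟨g, hg, hgn⟩ := exists_extension_norm_eq J.range (S.mkContinuous 1 hSn)
  exact ⟨g, hgn ▸ S.mkContinuous_norm_le zero_le_one _,
    fun x => (hg (J.rangeRestrict x)).trans (hS x)⟩

theorem exists_norm_le_norm_comp_sub_le (r : X →L[ℂ] E) (T : X →L[ℂ] ℂ) {α β : ℝ} (hα : 0 ≤ α)
    (hβ : 0 ≤ β) (h : ∀ x, ‖T x‖ ≤ max (α * ‖r x‖) (β * ‖x‖)) :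
    ∃ L : E →L[ℂ] ℂ, ‖L‖ ≤ α ∧ ∀ x, ‖L (r x) - T x‖ ≤ β * ‖x‖ := by
  obtain ⟨g, hg, hgT⟩ := exists_continuousLinearMap_comp_eq
    (((α : ℂ) • (r : X →ₗ[ℂ] E)).prod ((β : ℂ) • LinearMap.id)) T fun x => by
      simpa [Prod.norm_def, norm_smul, abs_of_nonneg hα, abs_of_nonneg hβ] using h x
  have hgle : ∀ p, ‖g p‖ ≤ ‖p‖ := fun p => by simpa using g.le_of_opNorm_le hg p
  refine ⟨(α : ℂ) • g.comp (ContinuousLinearMap.inl ℂ E X),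
    ContinuousLinearMap.opNorm_le_bound _ hα fun e => ?_, fun x => ?_⟩
  · simpa [abs_of_nonneg hα] using mul_le_mul_of_nonneg_left (hgle (e, 0)) hα
  · have hsplit : ((α : ℂ) • g.comp (ContinuousLinearMap.inl ℂ E X)) (r x) - T x
        = -g (0, (β : ℂ) • x) := by
      rw [← ContinuousLinearMap.coe_coe T, ← hgT x, sub_eq_iff_eq_add', ← sub_eq_add_neg,
        eq_sub_iff_add_eq]
      simp [-smul_eq_mul, ← map_smul, ← map_add]
    rw [hsplit, norm_neg]
    exact (hgle _).trans_eq (by simp [Prod.norm_def, norm_smul, abs_of_nonneg hβ, hβ, mul_nonneg])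

end Duality

section Osgood

theorem norm_sub_le_of_forall_mem_ball {h : ℂ → ℂ} {c z : ℂ} {R C : ℝ}
    (hd : DifferentiableOn ℂ h (ball c R)) (hC : ∀ x ∈ ball c R, ‖h x‖ ≤ C) (hz : z ∈ ball c R) :
    ‖h z - h c‖ ≤ 2 * C / R * ‖z - c‖ := by
  have hc : c ∈ ball c R := mem_ball_self (pos_of_mem_ball hz)
  simpa [dist_eq_norm] using dist_le_div_mul_dist_of_mapsTo_ball (R₂ := 2 * C) hd (fun x hx => by
    rw [mem_closedBall, dist_eq_norm]
    linarith [norm_sub_le (h x) (h c), hC x hx, hC c hc]) hz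

theorem norm_deriv_le_of_closedBall_subset {h : ℂ → ℂ} {U : Set ℂ} {c : ℂ} {R C : ℝ} (hR : 0 < R)
    (hd : DifferentiableOn ℂ h U) (hU : closedBall c R ⊆ U) (hC : ∀ x ∈ U, ‖h x‖ ≤ C) :
    ‖deriv h c‖ ≤ C / R :=
  norm_deriv_le_of_forall_mem_sphere_norm_le hR (hd.diffContOnCl_ball hU)
    fun x hx => hC x (hU (sphere_subset_closedBall hx))

theorem norm_deriv_sub_deriv_le {h : ℂ → ℂ} {c z : ℂ} {R C : ℝ}
    (hd : DifferentiableOn ℂ h (ball c (2 * R))) (hC : ∀ x ∈ ball c (2 * R), ‖h x‖ ≤ C)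
    (hz : z ∈ ball c R) : ‖deriv h z - deriv h c‖ ≤ 2 * (C / R) / R * ‖z - c‖ := by
  have hR : 0 < R := pos_of_mem_ball hz
  refine norm_sub_le_of_forall_mem_ball
    ((hd.deriv isOpen_ball).mono (ball_subset_ball (by linarith))) (fun x hx => ?_) hz
  exact norm_deriv_le_of_closedBall_subset hR hd
    (closedBall_subset_ball' (by rw [mem_ball] at hx; linarith)) hC

theorem norm_partialDeriv_sub_le {g : ℂ → ℂ → ℂ} {z₀ w₀ z w : ℂ} {R C : ℝ}
    (h₁ : ∀ w ∈ ball w₀ (2 * R), DifferentiableOn ℂ (fun z => g z w) (ball z₀ (2 * R)))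
    (h₂ : ∀ z ∈ ball z₀ (2 * R), DifferentiableOn ℂ (g z) (ball w₀ (2 * R)))
    (hC : ∀ z ∈ ball z₀ (2 * R), ∀ w ∈ ball w₀ (2 * R), ‖g z w‖ ≤ C)
    (hz : z ∈ ball z₀ R) (hw : w ∈ ball w₀ R) :
    ‖deriv (fun z => g z w) z - deriv (fun z => g z w₀) z₀‖ ≤
      2 * (C / R) / R * ‖z - z₀‖ + 2 * C / (2 * R) * ‖w - w₀‖ / R := by
  have hR : 0 < R := pos_of_mem_ball hz
  have hw' : w ∈ ball w₀ (2 * R) := ball_subset_ball (by linarith) hw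
  have hw₀ : w₀ ∈ ball w₀ (2 * R) := mem_ball_self (by linarith)
  have hz₀ : ball z₀ (2 * R) ∈ 𝓝 z₀ := ball_mem_nhds z₀ (by linarith)
  refine (norm_sub_le_norm_sub_add_norm_sub _ (deriv (fun z => g z w) z₀) _).trans
    (add_le_add ?_ ?_)
  · exact norm_deriv_sub_deriv_le (h₁ w hw') (fun z hz => hC z hz w hw') hz
  · rw [← deriv_fun_sub ((h₁ w hw').differentiableAt hz₀) ((h₁ w₀ hw₀).differentiableAt hz₀)]
    exact norm_deriv_le_of_closedBall_subset hR ((h₁ w hw').sub (h₁ w₀ hw₀))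
      (closedBall_subset_ball (by linarith))
      fun z hz => norm_sub_le_of_forall_mem_ball (h₂ z hz) (hC z hz) hw'

theorem continuousAt_partialDeriv {g : ℂ → ℂ → ℂ} {U V : Set ℂ} (hU : IsOpen U) (hV : IsOpen V)
    (h₁ : ∀ w ∈ V, DifferentiableOn ℂ (fun z => g z w) U)
    (h₂ : ∀ z ∈ U, DifferentiableOn ℂ (g z) V) {C : ℝ}
    (hC : ∀ z ∈ U, ∀ w ∈ V, ‖g z w‖ ≤ C) {p : ℂ × ℂ} (hp : p ∈ U ×ˢ V) :
    ContinuousAt (fun q : ℂ × ℂ => deriv (fun z => g z q.2) q.1) p := by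
  obtain ⟨r, hr, hrU⟩ := Metric.isOpen_iff.1 hU p.1 hp.1
  obtain ⟨s, hs, hsV⟩ := Metric.isOpen_iff.1 hV p.2 hp.2
  set R := min r s / 2 with hR
  have hR0 : 0 < R := by positivity
  have hU' : ball p.1 (2 * R) ⊆ U := (ball_subset_ball (by
    rw [hR]; linarith [min_le_left r s])).trans hrU
  have hV' : ball p.2 (2 * R) ⊆ V := (ball_subset_ball (by
    rw [hR]; linarith [min_le_right r s])).trans hsV
  have hlim : Tendsto (fun q : ℂ × ℂ => 2 * (C / R) / R * ‖q.1 - p.1‖ +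
      2 * C / (2 * R) * ‖q.2 - p.2‖ / R) (𝓝 p) (𝓝 0) := by
    refine Continuous.tendsto' (by fun_prop) _ _ (by simp)
  refine tendsto_iff_norm_sub_tendsto_zero.2
    (squeeze_zero' (Eventually.of_forall fun _ => norm_nonneg _) ?_ hlim)
  filter_upwards [prod_mem_nhds (ball_mem_nhds p.1 hR0) (ball_mem_nhds p.2 hR0)] with q hq
  exact norm_partialDeriv_sub_le (fun w hw => (h₁ w (hV' hw)).mono hU')
    (fun z hz => (h₂ z (hU' hz)).mono hV') (fun z hz w hw => hC z (hU' hz) w (hV' hw)) hq.1 hq.2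

/-- **Osgood's lemma** for bounded functions of two variables. -/
theorem differentiableAt_of_separately {g : ℂ → ℂ → ℂ} {U V : Set ℂ} (hU : IsOpen U)
    (hV : IsOpen V) (h₁ : ∀ w ∈ V, DifferentiableOn ℂ (fun z => g z w) U)
    (h₂ : ∀ z ∈ U, DifferentiableOn ℂ (g z) V) {C : ℝ}
    (hC : ∀ z ∈ U, ∀ w ∈ V, ‖g z w‖ ≤ C) {p : ℂ × ℂ} (hp : p ∈ U ×ˢ V) :
    DifferentiableAt ℂ (fun q : ℂ × ℂ => g q.1 q.2) p := by
  have hc₁ := continuousAt_partialDeriv hU hV h₁ h₂ hC hp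
  have hc₂ : ContinuousAt (fun q : ℂ × ℂ => deriv (g q.1) q.2) p :=
    ContinuousAt.comp (f := Prod.swap) (x := p) (continuousAt_partialDeriv
      (g := fun w z => g z w) hV hU h₂ h₁ (fun w hw z hz => hC z hz w hw) hp.symm)
      continuous_swap.continuousAt
  have hspan : Continuous (fun c : ℂ => ContinuousLinearMap.toSpanSingleton ℂ c) :=
    (ContinuousLinearMap.toSpanSingletonLIE ℂ ℂ).continuous
  have hnhds : U ×ˢ V ∈ 𝓝 p := (hU.prod hV).mem_nhds hp
  refine (hasStrictFDerivAt_uncurry_coprod (𝕜 := ℂ) (f := g)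
    (f₁ := fun z w => ContinuousLinearMap.toSpanSingleton ℂ (deriv (fun z => g z w) z))
    (f₂ := fun z w => ContinuousLinearMap.toSpanSingleton ℂ (deriv (g z) w))
    ?_ ?_ (hspan.continuousAt.comp hc₁) (hspan.continuousAt.comp hc₂)).hasFDerivAt.differentiableAt
  · filter_upwards [hnhds] with q hq
    exact ((h₁ q.2 hq.2).differentiableAt (hU.mem_nhds hq.1)).hasDerivAt.hasFDerivAt
  · filter_upwards [hnhds] with q hq
    exact ((h₂ q.1 hq.1).differentiableAt (hV.mem_nhds hq.2)).hasDerivAt.hasFDerivAt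

end Osgood

theorem norm_le_max_two_constants {D A : Set ℂ} (hD : IsOpen D) (hA : A ⊆ closure D) {F : ℂ → ℂ}
    (hF : DifferentiableOn ℂ F D) {N ρ s : ℝ} (hs : 0 ≤ s) (hFN : ∀ z ∈ D, ‖F z‖ ≤ N)
    (hFA : ∀ a ∈ A, ∀ ε > 0, ∀ᶠ z in 𝓝[D] a, ‖F z‖ ≤ ρ + ε) {z : ℂ} (hz : z ∈ D) :
    ‖F z‖ ≤ max (Real.exp (s * omegaC A D z) * ρ) (Real.exp (-(s * (1 - omegaC A D z))) * N) := by
  rcases hs.eq_or_lt with rfl | hs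
  · exact le_max_of_le_right (by simpa using hFN z hz)
  set M := max (Real.exp s * ρ) N
  have hM : max (Real.exp (s * omegaC A D z) * ρ) (Real.exp (-(s * (1 - omegaC A D z))) * N)
      = M * Real.exp (-(s * (1 - omegaC A D z))) := by
    rw [max_mul_of_nonneg _ _ (Real.exp_pos _).le, mul_right_comm, ← Real.exp_add, mul_comm N]
    ring_nf
  rw [hM]
  rcases le_or_gt M 0 with hM0 | hM0
  · have hN0 : ‖F z‖ = 0 :=
      ((hFN z hz).trans ((le_max_right _ _).trans hM0)).antisymm (norm_nonneg _)
    have : M = 0 := hM0.antisymm (hN0 ▸ (hFN z hz).trans (le_max_right _ _))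
    simp [hN0, this]
  refine norm_le_two_constants hD hA hF hM0 hs (fun x hx => (hFN x hx).trans (le_max_right _ _))
    (fun a ha ε hε => ?_) hz
  filter_upwards [hFA a ha ε hε] with x hx
  have : ρ ≤ M * Real.exp (-s) := by
    rw [Real.exp_neg, ← div_eq_mul_inv, le_div_iff₀ (Real.exp_pos s), mul_comm]
    exact le_max_left _ _
  linarith

theorem differentiableOn_of_norm_sub_le {U : Set ℂ} (hU : IsOpen U) {u : ℕ → ℂ → ℂ} {g : ℂ → ℂ}
    (hu : ∀ n, DifferentiableOn ℂ (u n) U) {K : ℕ → ℝ} (hK : Tendsto K atTop (𝓝 0))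
    (h : ∀ n, ∀ x ∈ U, ‖u n x - g x‖ ≤ K n) : DifferentiableOn ℂ g U := by
  have hunif : TendstoUniformlyOn u g atTop U := by
    refine Metric.tendstoUniformlyOn_iff.2 fun ε hε => ?_
    filter_upwards [hK.eventually_lt_const hε] with n hn x hx
    rw [dist_comm, dist_eq_norm]
    exact (h n x hx).trans_lt hn
  exact hunif.tendstoLocallyUniformlyOn.differentiableOn (Eventually.of_forall hu) hU

theorem tendsto_of_norm_sub_le_add {ι Y : Type*} [SeminormedAddCommGroup Y] {l : Filter ι}
    {u : ι → Y} {c : Y} {K : ℕ → ℝ} (hK : Tendsto K atTop (𝓝 0)) {R : ℕ → ι → ℝ}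
    (hR : ∀ n, Tendsto (R n) l (𝓝 0)) (h : ∀ᶠ x in l, ∀ n, ‖u x - c‖ ≤ K n + R n x) :
    Tendsto u l (𝓝 c) := by
  refine Metric.tendsto_nhds.2 fun ε hε => ?_
  obtain ⟨n, hn⟩ := (hK.eventually_lt_const (half_pos hε)).exists
  filter_upwards [h, (hR n).eventually_lt_const (half_pos hε)] with x hx hx'
  rw [dist_eq_norm]
  linarith [hx n]

/-- The domain `{ω(z, A, D) + ω(w, B, G) < 1}` attached to a cross. -/
def crossHull (D A G B : Set ℂ) : Set (ℂ × ℂ) :=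
  {p ∈ D ×ˢ G | omegaC A D p.1 + omegaC B G p.2 < 1}

section CrossData

variable {E X : Type*} [NormedAddCommGroup E] [NormedSpace ℂ E]
  [NormedAddCommGroup X] [NormedSpace ℂ X]

/-- The functional-analytic form of a bounded function on a cross: `X` is a space of holomorphic
functions on `D`, evaluated at points by `ev`, and `r` sends them to their boundary values on `A`;
`Φ : G → E` is a holomorphic map with `‖Φ‖ ≤ M` whose limits at `B` are boundary values of elements
of `X`. -/
structure CrossData (D A G B : Set ℂ) (r : X →L[ℂ] E) (ev : ℂ → X →L[ℂ] ℂ) (Φ : ℂ → E)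
    (M : ℝ) : Prop where
  left : ExteriorAccessible D A
  right : ExteriorAccessible G B
  differentiableOn_eval : ∀ x, DifferentiableOn ℂ (fun z => ev z x) D
  norm_eval_le : ∀ z ∈ D, ∀ x, ‖ev z x‖ ≤ ‖x‖
  eventually_norm_eval_le : ∀ x, ∀ a ∈ A, ∀ ε > 0, ∀ᶠ z in 𝓝[D] a, ‖ev z x‖ ≤ ‖r x‖ + ε
  pos : 0 < M
  differentiableOn : DifferentiableOn ℂ Φ G
  norm_le : ∀ w ∈ G, ‖Φ w‖ ≤ M
  exists_tendsto : ∀ b ∈ B, ∃ x, ‖x‖ ≤ M ∧ Tendsto Φ (𝓝[G] b) (𝓝 (r x))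

/-- Functionals `L n z` approximating the evaluation `ev z` through boundary values, and elements
`F n w` of `X` whose boundary values approximate `Φ w`, with the errors dictated by the harmonic
measures. -/
structure IsApproximation (D A G B : Set ℂ) (r : X →L[ℂ] E) (ev : ℂ → X →L[ℂ] ℂ) (Φ : ℂ → E)
    (M : ℝ) (L : ℕ → ℂ → E →L[ℂ] ℂ) (F : ℕ → ℂ → X) : Prop where
  norm_functional_le : ∀ n, ∀ z ∈ D, ‖L n z‖ ≤ Real.exp (n * omegaC A D z)
  norm_functional_sub_le : ∀ n, ∀ z ∈ D, ∀ x,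
    ‖L n z (r x) - ev z x‖ ≤ Real.exp (-(n * (1 - omegaC A D z))) * ‖x‖
  norm_le : ∀ n, ∀ w ∈ G, ‖F n w‖ ≤ 2 * M * Real.exp (n * omegaC B G w)
  norm_sub_le : ∀ n, ∀ w ∈ G, ‖Φ w - r (F n w)‖ ≤ 2 * M * Real.exp (-(n * (1 - omegaC B G w)))

variable {D A G B : Set ℂ} {r : X →L[ℂ] E} {ev : ℂ → X →L[ℂ] ℂ} {Φ : ℂ → E} {M : ℝ}

namespace CrossData

theorem exists_functional (h : CrossData D A G B r ev Φ M) {s : ℝ} (hs : 0 ≤ s) {z : ℂ}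
    (hz : z ∈ D) :
    ∃ L : E →L[ℂ] ℂ, ‖L‖ ≤ Real.exp (s * omegaC A D z) ∧
      ∀ x, ‖L (r x) - ev z x‖ ≤ Real.exp (-(s * (1 - omegaC A D z))) * ‖x‖ :=
  exists_norm_le_norm_comp_sub_le r (ev z) (Real.exp_pos _).le (Real.exp_pos _).le fun x =>
    norm_le_max_two_constants h.left.isOpen h.left.subset_closure (h.differentiableOn_eval x) hs
      (fun z hz => h.norm_eval_le z hz x) (h.eventually_norm_eval_le x) hz

theorem exists_norm_sub_le (h : CrossData D A G B r ev Φ M) {s : ℝ} (hs : 0 ≤ s) {w : ℂ}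
    (hw : w ∈ G) :
    ∃ x, ‖x‖ ≤ 2 * M * Real.exp (s * omegaC B G w) ∧
      ‖Φ w - r x‖ ≤ 2 * M * Real.exp (-(s * (1 - omegaC B G w))) := by
  have hM := h.pos
  set b := 2 * M * Real.exp (s * omegaC B G w) with hb
  set a := 2 * M * Real.exp (-(s * (1 - omegaC B G w))) with ha
  have hb0 : 0 < b := by positivity
  have ha0 : 0 < a := by positivity
  suffices H : ∀ l : E →L[ℂ] ℂ, ‖l‖ ≤ 1 / a → ‖l.comp r‖ ≤ 1 / b → ‖l (Φ w)‖ < 1 by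
    obtain ⟨x, hx, hx'⟩ := exists_norm_le_norm_sub_lt r (Φ w) ha0 hb0 H
    exact ⟨x, hx, hx'.le⟩
  intro l hl hlr
  have key := norm_le_max_two_constants h.right.isOpen h.right.subset_closure
    (F := fun w => l (Φ w)) (l.differentiable.comp_differentiableOn h.differentiableOn) hs
    (N := 1 / a * M) (ρ := 1 / b * M) (fun w hw => l.le_of_opNorm_le_of_le hl (h.norm_le w hw))
    (fun β hβ ε hε => ?_) hw
  · have hb2 : Real.exp (s * omegaC B G w) * (1 / b * M) = 1 / 2 := by rw [hb]; field_simp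
    have ha2 : Real.exp (-(s * (1 - omegaC B G w))) * (1 / a * M) = 1 / 2 := by
      rw [ha]; field_simp
    rw [ha2, hb2, max_self] at key
    exact key.trans_lt one_half_lt_one
  · obtain ⟨x, hx, hlim⟩ := h.exists_tendsto β hβ
    have hlx : ‖l (r x)‖ < 1 / b * M + ε :=
      ((l.comp r).le_of_opNorm_le_of_le hlr hx).trans_lt (lt_add_of_pos_right _ hε)
    have hlim' := ((l.continuous.tendsto _).comp hlim).norm
    exact (hlim'.eventually_lt_const hlx).mono fun _ => le_of_lt

theorem exists_isApproximation (h : CrossData D A G B r ev Φ M) :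
    ∃ L F, IsApproximation D A G B r ev Φ M L F := by
  choose! L hL hLr using fun (n : ℕ) (z : ℂ) (hz : z ∈ D) =>
    h.exists_functional (s := n) n.cast_nonneg hz
  choose! F hF hFr using fun (n : ℕ) (w : ℂ) (hw : w ∈ G) =>
    h.exists_norm_sub_le (s := n) n.cast_nonneg hw
  exact ⟨L, F, hL, hLr, hF, hFr⟩

end CrossData

/-- The common limit of the two approximations `L n z (Φ w)` and `ev z (F n w)`. -/
def crossLimit (L : ℕ → ℂ → E →L[ℂ] ℂ) (Φ : ℂ → E) (p : ℂ × ℂ) : ℂ :=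
  limUnder atTop fun n => L n p.1 (Φ p.2)

theorem norm_sub_limUnder_le {Y : Type*} [NormedAddCommGroup Y] [CompleteSpace Y] {a b : ℕ → Y}
    {C ρ : ℝ} (hρ : ρ < 1) (hab : ∀ n, ‖a n - b n‖ ≤ C * ρ ^ n)
    (hab' : ∀ n, ‖a (n + 1) - b n‖ ≤ C * ρ ^ n) (n : ℕ) :
    ‖a n - limUnder atTop a‖ ≤ (C + 2 * C / (1 - ρ)) * ρ ^ n ∧
      ‖b n - limUnder atTop a‖ ≤ (C + 2 * C / (1 - ρ)) * ρ ^ n := by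
  have hstep : ∀ n, dist (a n) (a (n + 1)) ≤ 2 * C * ρ ^ n := fun n => by
    rw [dist_eq_norm]
    linarith [norm_sub_le_norm_sub_add_norm_sub (a n) (b n) (a (n + 1)),
      norm_sub_rev (b n) (a (n + 1)), hab n, hab' n]
  have hlim := dist_le_of_le_geometric_of_tendsto ρ (2 * C) hρ hstep
    (cauchySeq_of_le_geometric ρ (2 * C) hρ hstep).tendsto_limUnder n
  have hC : 0 ≤ C * ρ ^ n := (norm_nonneg _).trans (hab n)
  rw [dist_eq_norm, mul_div_right_comm] at hlim
  rw [add_mul]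
  refine ⟨by linarith, ?_⟩
  linarith [norm_sub_le_norm_sub_add_norm_sub (b n) (a n) (limUnder atTop a),
    norm_sub_rev (a n) (b n), hab n]

namespace CrossData

variable {L : ℕ → ℂ → E →L[ℂ] ℂ} {F : ℕ → ℂ → X}

theorem norm_functional_sub_eval_le (h : CrossData D A G B r ev Φ M)
    (hLF : IsApproximation D A G B r ev Φ M L F) {m n : ℕ} (hmn : m ≤ n) (hnm : n ≤ m + 1) {z : ℂ}
    (hz : z ∈ D) {α β K : ℝ} (hα : omegaC A D z ≤ α) {e : E} {x : X}
    (he : ‖e - r x‖ ≤ K * Real.exp (-(m * (1 - β)))) (hx : ‖x‖ ≤ K * Real.exp (m * β)) :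
    ‖L n z e - ev z x‖ ≤ 4 * K * Real.exp (α + β - 1) ^ m := by
  have hω0 := omegaC_nonneg h.left.isOpen h.left.subset_closure hz
  have hω1 := omegaC_le_one h.left.isOpen h.left.subset_closure hz
  have : 0 ≤ K := nonneg_of_mul_nonneg_left ((norm_nonneg x).trans hx) (Real.exp_pos _)
  have hmn' : (m : ℝ) ≤ n := by exact_mod_cast hmn
  have hnm' : (n : ℝ) ≤ m + 1 := by exact_mod_cast hnm
  have hL : ‖L n z‖ ≤ 3 * Real.exp (m * α) := by
    calc ‖L n z‖ ≤ Real.exp (n * omegaC A D z) := hLF.norm_functional_le n z hz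
      _ ≤ Real.exp (1 + m * α) := by gcongr; nlinarith [m.cast_nonneg (α := ℝ)]
      _ ≤ 3 * Real.exp (m * α) := by
          rw [Real.exp_add]; gcongr; linarith [Real.exp_one_lt_d9]
  have hLx : ‖L n z (r x) - ev z x‖ ≤ Real.exp (-(m * (1 - α))) * (K * Real.exp (m * β)) := by
    have hmα : m * (1 - α) ≤ n * (1 - omegaC A D z) :=
      (mul_le_mul_of_nonneg_left (sub_le_sub_left hα 1) m.cast_nonneg).trans
        (mul_le_mul_of_nonneg_right hmn' (sub_nonneg.2 hω1))
    exact (hLF.norm_functional_sub_le n z hz x).trans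
      (mul_le_mul (Real.exp_le_exp.2 (neg_le_neg hmα)) hx (norm_nonneg x) (Real.exp_pos _).le)
  have hexp : Real.exp (m * α) * Real.exp (-(m * (1 - β))) = Real.exp (α + β - 1) ^ m ∧
      Real.exp (-(m * (1 - α))) * Real.exp (m * β) = Real.exp (α + β - 1) ^ m := by
    constructor <;> rw [← Real.exp_add, ← Real.exp_nat_mul] <;> ring_nf
  calc ‖L n z e - ev z x‖ = ‖L n z (e - r x) + (L n z (r x) - ev z x)‖ := by
        rw [map_sub, sub_add_sub_cancel]
    _ ≤ 3 * Real.exp (m * α) * (K * Real.exp (-(m * (1 - β)))) +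
        Real.exp (-(m * (1 - α))) * (K * Real.exp (m * β)) :=
      norm_add_le_of_le ((L n z).le_of_opNorm_le_of_le hL he) hLx
    _ = 4 * K * Real.exp (α + β - 1) ^ m := by linear_combination 3 * K * hexp.1 + K * hexp.2

theorem exists_norm_sub_crossLimit_le (h : CrossData D A G B r ev Φ M)
    (hLF : IsApproximation D A G B r ev Φ M L F) {q : ℝ} (hq : q < 0) :
    ∃ C, ∀ z ∈ D, ∀ w ∈ G, omegaC A D z + omegaC B G w - 1 ≤ q → ∀ n : ℕ,
      ‖L n z (Φ w) - crossLimit L Φ (z, w)‖ ≤ C * Real.exp q ^ n ∧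
      ‖ev z (F n w) - crossLimit L Φ (z, w)‖ ≤ C * Real.exp q ^ n := by
  have hM := h.pos
  refine ⟨_, fun z hz w hw hzw => norm_sub_limUnder_le (C := 4 * (2 * M))
    (Real.exp_lt_one_iff.2 hq) (fun n => ?_) (fun n => ?_)⟩
  all_goals
    refine (h.norm_functional_sub_eval_le hLF (m := n) (by lia) (by lia) hz le_rfl
      (hLF.norm_sub_le n w hw) (hLF.norm_le n w hw)).trans ?_
    gcongr

theorem differentiableOn_crossLimit (h : CrossData D A G B r ev Φ M)
    (hLF : IsApproximation D A G B r ev Φ M L F) :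
    DifferentiableOn ℂ (crossLimit L Φ) (crossHull D A G B) := by
  rintro ⟨z₀, w₀⟩ ⟨⟨hz₀, hw₀⟩, hlt⟩
  set δ := (1 - (omegaC A D z₀ + omegaC B G w₀)) / 3 with hδ
  have hδ0 : 0 < δ := by rw [hδ]; linarith
  obtain ⟨C, hC⟩ := h.exists_norm_sub_crossLimit_le hLF (neg_lt_zero.2 hδ0)
  have hρ : Tendsto (fun n : ℕ => C * Real.exp (-δ) ^ n) atTop (𝓝 0) := by
    simpa using (tendsto_pow_atTop_nhds_zero_of_lt_one (Real.exp_pos (-δ)).le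
      (Real.exp_lt_one_iff.2 (neg_lt_zero.2 hδ0))).const_mul C
  set U := omegaSublevel A D (omegaC A D z₀ + δ)
  set V := omegaSublevel B G (omegaC B G w₀ + δ)
  have hU : IsOpen U := h.left.isOpen_omegaSublevel _
  have hV : IsOpen V := h.right.isOpen_omegaSublevel _
  have hUV : ∀ z ∈ U, ∀ w ∈ V, ∀ n : ℕ,
      ‖L n z (Φ w) - crossLimit L Φ (z, w)‖ ≤ C * Real.exp (-δ) ^ n ∧
      ‖ev z (F n w) - crossLimit L Φ (z, w)‖ ≤ C * Real.exp (-δ) ^ n := fun z hz w hw =>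
    hC z hz.1 w hw.1 (by linarith [hz.2, hw.2])
  refine (differentiableAt_of_separately (g := fun z w => crossLimit L Φ (z, w)) hU hV
    (C := M + C) (fun w hw => ?_) (fun z hz => ?_) (fun z hz w hw => ?_) (p := (z₀, w₀))
    ⟨⟨hz₀, lt_add_of_pos_right _ hδ0⟩, hw₀, lt_add_of_pos_right _ hδ0⟩).differentiableWithinAt
  · exact differentiableOn_of_norm_sub_le hU (fun n => (h.differentiableOn_eval (F n w)).mono
      (omegaSublevel_subset ..)) hρ fun n z hz => (hUV z hz w hw n).2
  · exact differentiableOn_of_norm_sub_le hV (fun n => (L n z).differentiable.comp_differentiableOn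
      (h.differentiableOn.mono (omegaSublevel_subset ..))) hρ fun n w hw => (hUV z hz w hw n).1
  · have hL := (L 0 z).le_of_opNorm_le_of_le (hLF.norm_functional_le 0 z hz.1) (h.norm_le w hw.1)
    have hlim := (hUV z hz w hw 0).1
    rw [norm_sub_rev] at hlim
    simp only [CharP.cast_eq_zero, zero_mul, Real.exp_zero, one_mul, pow_zero, mul_one] at hL hlim
    linarith [norm_sub_norm_le (crossLimit L Φ (z, w)) (L 0 z (Φ w))]

theorem tendsto_crossLimit (h : CrossData D A G B r ev Φ M)
    (hLF : IsApproximation D A G B r ev Φ M L F) {l l' : Filter ℂ} {α β K : ℝ} (hαβ : α + β < 1)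
    (hl : ∀ᶠ z in l, z ∈ D ∧ omegaC A D z ≤ α) (hl' : ∀ᶠ w in l', w ∈ G ∧ omegaC B G w ≤ β)
    {e : E} (hΦ : Tendsto Φ l' (𝓝 e)) {x : ℕ → X}
    (he : ∀ n : ℕ, ‖e - r (x n)‖ ≤ K * Real.exp (-(n * (1 - β))))
    (hx : ∀ n : ℕ, ‖x n‖ ≤ K * Real.exp (n * β)) {c : ℕ → ℂ} {c₀ : ℂ}
    (hev : ∀ n, Tendsto (fun z => ev z (x n)) l (𝓝 (c n))) (hc : Tendsto c atTop (𝓝 c₀)) :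
    Tendsto (crossLimit L Φ) (l ×ˢ l') (𝓝 c₀) := by
  have hq : α + β - 1 < 0 := by linarith
  set q := Real.exp (α + β - 1)
  obtain ⟨C, hC⟩ := h.exists_norm_sub_crossLimit_le hLF hq
  have hqn : Tendsto (fun n : ℕ => q ^ n) atTop (𝓝 0) :=
    tendsto_pow_atTop_nhds_zero_of_lt_one (Real.exp_pos _).le (Real.exp_lt_one_iff.2 hq)
  have hK : Tendsto (fun n => C * q ^ n + 4 * K * q ^ n + ‖c n - c₀‖) atTop (𝓝 0) := by
    simpa using ((hqn.const_mul C).add (hqn.const_mul (4 * K))).add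
      (tendsto_iff_norm_sub_tendsto_zero.1 hc)
  have hR : ∀ n : ℕ, Tendsto (fun p : ℂ × ℂ =>
      Real.exp (n * α) * ‖Φ p.2 - e‖ + ‖ev p.1 (x n) - c n‖) (l ×ˢ l') (𝓝 0) := fun n => by
    simpa using (((tendsto_iff_norm_sub_tendsto_zero.1 hΦ).comp tendsto_snd).const_mul
      (Real.exp (n * α))).add ((tendsto_iff_norm_sub_tendsto_zero.1 (hev n)).comp tendsto_fst)
  refine tendsto_of_norm_sub_le_add hK hR ?_
  filter_upwards [hl.prod_mk hl'] with ⟨z, w⟩ ⟨⟨hz, hzα⟩, hw, hwβ⟩ n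
  have hlim := (hC z hz w hw (by linarith) n).1
  have hLΦ : ‖L n z (Φ w - e)‖ ≤ Real.exp (n * α) * ‖Φ w - e‖ :=
    (L n z).le_of_opNorm_le ((hLF.norm_functional_le n z hz).trans (by gcongr)) _
  have hLev := h.norm_functional_sub_eval_le hLF le_rfl (Nat.le_succ n) hz hzα (he n) (hx n)
  calc ‖crossLimit L Φ (z, w) - c₀‖
      = ‖-(L n z (Φ w) - crossLimit L Φ (z, w)) + L n z (Φ w - e) + (L n z e - ev z (x n)) +
          (ev z (x n) - c n) + (c n - c₀)‖ := by rw [map_sub]; ring_nf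
    _ ≤ C * q ^ n + Real.exp (n * α) * ‖Φ w - e‖ + 4 * K * q ^ n + ‖ev z (x n) - c n‖ +
          ‖c n - c₀‖ :=
      norm_add_le_of_le (norm_add_le_of_le (norm_add_le_of_le (norm_add_le_of_le
        ((norm_neg _).trans_le hlim) hLΦ) hLev) le_rfl) le_rfl
    _ = _ := by ring

theorem tendsto_crossLimit_left (h : CrossData D A G B r ev Φ M)
    (hLF : IsApproximation D A G B r ev Φ M L F) {a w : ℂ} (ha : a ∈ A)
    (hw : w ∈ omegaSublevel B G 1) {d : E →L[ℂ] ℂ}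
    (hd : ∀ x, Tendsto (fun z => ev z x) (𝓝[D] a) (𝓝 (d (r x)))) :
    Tendsto (crossLimit L Φ) (𝓝[D ×ˢ G] (a, w)) (𝓝 (d (Φ w))) := by
  obtain ⟨hwG, hw1⟩ := hw
  have hM := h.pos
  set δ := (1 - omegaC B G w) / 3 with hδ
  have hδ0 : 0 < δ := by rw [hδ]; linarith
  have hwδ : w ∈ omegaSublevel B G (omegaC B G w + δ) := ⟨hwG, lt_add_of_pos_right _ hδ0⟩
  have hlim : Tendsto (fun n => r (F n w)) atTop (𝓝 (Φ w)) := by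
    refine tendsto_iff_norm_sub_tendsto_zero.2 (squeeze_zero_norm (fun n => ?_)
      (?_ : Tendsto (fun n : ℕ => 2 * M * Real.exp (-(n * (1 - omegaC B G w)))) atTop (𝓝 0)))
    · rw [norm_norm, norm_sub_rev]
      exact hLF.norm_sub_le n w hwG
    · have hexp : Tendsto (fun n : ℕ => n * (1 - omegaC B G w)) atTop atTop :=
        tendsto_natCast_atTop_atTop.atTop_mul_const (sub_pos.2 hw1)
      simpa using (Real.tendsto_exp_neg_atTop_nhds_zero.comp hexp).const_mul (2 * M)
  rw [nhdsWithin_prod_eq]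
  refine h.tendsto_crossLimit hLF (α := δ) (β := omegaC B G w + δ) (K := 2 * M) (x := (F · w))
    (by linarith) (eventually_mem_nhdsWithin.and (h.left.vanishesAt_omegaC a ha δ hδ0))
    (((h.right.isOpen_omegaSublevel _).eventually_mem hwδ).filter_mono nhdsWithin_le_nhds |>.mono
      fun _ hy => ⟨hy.1, hy.2.le⟩) (h.differentiableOn.continuousOn w hwG) (fun n => ?_)
    (fun n => ?_) (fun n => hd (F n w)) ((d.continuous.tendsto _).comp hlim)
  · refine (hLF.norm_sub_le n w hwG).trans ?_
    gcongr
    linarith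
  · refine (hLF.norm_le n w hwG).trans ?_
    gcongr
    linarith

theorem tendsto_crossLimit_right (h : CrossData D A G B r ev Φ M)
    (hLF : IsApproximation D A G B r ev Φ M L F) {b z : ℂ} (hb : b ∈ B) {α : ℝ} (hα : α < 1)
    (hz : ∀ᶠ ζ in 𝓝[D] z, omegaC A D ζ < α) {x : X} (hx : Tendsto Φ (𝓝[G] b) (𝓝 (r x))) {c : ℂ}
    (hev : Tendsto (fun ζ => ev ζ x) (𝓝[D] z) (𝓝 c)) :
    Tendsto (crossLimit L Φ) (𝓝[D ×ˢ G] (z, b)) (𝓝 c) := by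
  have hδ : 0 < (1 - α) / 2 := by linarith
  rw [nhdsWithin_prod_eq]
  refine h.tendsto_crossLimit hLF (α := α) (β := (1 - α) / 2) (K := ‖x‖) (x := fun _ => x)
    (by linarith) (eventually_mem_nhdsWithin.and (hz.mono fun _ => le_of_lt))
    (eventually_mem_nhdsWithin.and (h.right.vanishesAt_omegaC b hb _ hδ)) hx (fun n => ?_)
    (fun n => ?_) (fun _ => hev) tendsto_const_nhds
  · rw [sub_self, norm_zero]
    positivity
  · exact le_mul_of_one_le_right (norm_nonneg x) (Real.one_le_exp (by positivity))

end CrossData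
end CrossData

section Separating

variable {E : Type*} [NormedAddCommGroup E] [NormedSpace ℂ E] [CompleteSpace E]

theorem clm_circleIntegral_comm (l : E →L[ℂ] ℂ) {f : ℂ → E} {c : ℂ} {R : ℝ}
    (hf : CircleIntegrable f c R) : l (∮ z in C(c, R), f z) = ∮ z in C(c, R), l (f z) := by
  simpa [circleIntegral] using
    ((l.restrictScalars ℝ).intervalIntegral_comp_comm hf.out).symm

theorem two_pi_I_inv_smul_circleIntegral_sub_inv_smul_of_separating {ι : Type*} {c w : ℂ} {R : ℝ}
    (hw : w ∈ ball c R) {Φ : ℂ → E} (hΦ : ContinuousOn Φ (sphere c R)) (l : ι → E →L[ℂ] ℂ)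
    (hl : ∀ x y, (∀ i, l i x = l i y) → x = y)
    (h : ∀ i, DiffContOnCl ℂ (fun w => l i (Φ w)) (ball c R)) :
    ((2 * π * I : ℂ)⁻¹ • ∮ z in C(c, R), (z - w)⁻¹ • Φ z) = Φ w := by
  refine hl _ _ fun i => ?_
  have hint : CircleIntegrable (fun z => (z - w)⁻¹ • Φ z) c R := by
    refine ContinuousOn.circleIntegrable (pos_of_mem_ball hw).le (ContinuousOn.smul ?_ hΦ)
    exact (continuousOn_id.sub continuousOn_const).inv₀ fun z hz hzw =>
      sphere_disjoint_ball.ne_of_mem hz hw (sub_eq_zero.1 hzw)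
  rw [map_smul, clm_circleIntegral_comm (l i) hint]
  simp only [map_smul]
  exact (h i).two_pi_i_inv_smul_circleIntegral_sub_inv_smul hw

theorem differentiableOn_of_separating {ι : Type*} {U : Set ℂ} (hU : IsOpen U) {Φ : ℂ → E}
    (hΦ : ContinuousOn Φ U) (l : ι → E →L[ℂ] ℂ) (hl : ∀ x y, (∀ i, l i x = l i y) → x = y)
    (h : ∀ i, DifferentiableOn ℂ (fun w => l i (Φ w)) U) : DifferentiableOn ℂ Φ U := by
  intro c hc
  obtain ⟨R, hR, hRU⟩ := nhds_basis_closedBall.mem_iff.1 (hU.mem_nhds hc)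
  lift R to NNReal using hR.le
  have hcont : ContinuousOn Φ (sphere c R) := hΦ.mono (sphere_subset_closedBall.trans hRU)
  have hps := hasFPowerSeriesOn_cauchy_integral (hcont.circleIntegrable R.2) (by exact_mod_cast hR)
  refine (hps.analyticAt.differentiableAt.congr_of_eventuallyEq ?_).differentiableWithinAt
  filter_upwards [ball_mem_nhds c hR] with w hw
  exact (two_pi_I_inv_smul_circleIntegral_sub_inv_smul_of_separating hw hcont l hl
    fun i => ((h i).mono hRU).diffContOnCl_ball subset_rfl).symm

end Separating

section Evaluation

variable {T : Type*} [TopologicalSpace T] {K L : Set T}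

open Classical in
/-- Evaluation of continuous functions on `K` at a point of the ambient space, with the junk value
`0` outside `K`. -/
def evalAt (K : Set T) (z : T) : C(K, ℂ) →L[ℂ] ℂ :=
  if h : z ∈ K then ContinuousMap.evalCLM ℂ ⟨z, h⟩ else 0

theorem evalAt_of_mem {z : T} (hz : z ∈ K) (F : C(K, ℂ)) : evalAt K z F = F ⟨z, hz⟩ := by
  simp [evalAt, hz]

theorem ext_evalAt {F₁ F₂ : C(K, ℂ)} (h : ∀ z ∈ K, evalAt K z F₁ = evalAt K z F₂) : F₁ = F₂ := by
  ext z
  simpa only [evalAt_of_mem z.2] using h z z.2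

theorem norm_evalAt_le [CompactSpace K] (z : T) (F : C(K, ℂ)) : ‖evalAt K z F‖ ≤ ‖F‖ := by
  by_cases hz : z ∈ K
  · rw [evalAt_of_mem hz]
    exact F.norm_coe_le_norm _
  · simp [evalAt, hz]

theorem norm_le_of_norm_evalAt_le [CompactSpace K] {F : C(K, ℂ)} {M : ℝ} (hM : 0 ≤ M)
    (h : ∀ z ∈ K, ‖evalAt K z F‖ ≤ M) : ‖F‖ ≤ M :=
  (ContinuousMap.norm_le _ hM).2 fun z => by simpa only [evalAt_of_mem z.2] using h z z.2

theorem continuousOn_evalAt (F : C(K, ℂ)) : ContinuousOn (fun z => evalAt K z F) K := by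
  rw [continuousOn_iff_continuous_domRestrict]
  convert F.continuous using 1
  ext z
  exact evalAt_of_mem z.2 F

theorem exists_continuousOn_evalAt_eq {S : Set T} {f : T × T → ℂ} (hf : ContinuousOn f (K ×ˢ S)) :
    ∃ Φ : T → C(K, ℂ), ContinuousOn Φ S ∧ ∀ w ∈ S, ∀ z ∈ K, evalAt K z (Φ w) = f (z, w) := by
  have hcont : Continuous (fun p : S × K => f (p.2, p.1)) :=
    hf.comp_continuous (f := fun p : S × K => ((p.2 : T), (p.1 : T))) (by fun_prop)
      fun p => ⟨p.2.2, p.1.2⟩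
  set φ : C(S, C(K, ℂ)) := ContinuousMap.curry ⟨_, hcont⟩
  refine ⟨Function.extend Subtype.val φ 0, ?_, fun w hw z hz => ?_⟩
  · rw [continuousOn_iff_continuous_domRestrict]
    convert φ.continuous using 1
    ext w : 1
    exact Subtype.val_injective.extend_apply _ _ w
  · rw [evalAt_of_mem hz, Subtype.val_injective.extend_apply φ 0 ⟨w, hw⟩]
    rfl

/-- Restriction of continuous functions to a smaller set. -/
def restrictCLM (h : L ⊆ K) : C(K, ℂ) →L[ℂ] C(L, ℂ) where
  toLinearMap := (ContinuousMap.compRightAlgHom ℂ ℂ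
    ⟨Set.inclusion h, continuous_inclusion h⟩).toLinearMap
  cont := ContinuousMap.continuous_precomp _

theorem evalAt_restrictCLM (h : L ⊆ K) {z : T} (hz : z ∈ L) (F : C(K, ℂ)) :
    evalAt L z (restrictCLM h F) = evalAt K z F := by
  rw [evalAt_of_mem hz, evalAt_of_mem (h hz)]
  rfl

end Evaluation

section HolomorphicFunctions

variable {D K L : Set ℂ}

/-- The space of continuous functions on `K` which are holomorphic on `D`. -/
def holoSubmodule (K D : Set ℂ) : Submodule ℂ C(K, ℂ) where
  carrier := {F | DifferentiableOn ℂ (fun z => evalAt K z F) D}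
  add_mem' h₁ h₂ := by simpa only [Set.mem_ofPred_eq, map_add] using h₁.fun_add h₂
  zero_mem' := by simpa only [Set.mem_ofPred_eq, map_zero] using differentiableOn_const 0
  smul_mem' c F h := by simpa only [Set.mem_ofPred_eq, map_smul] using h.fun_const_smul c

/-- Evaluation on the functions holomorphic on `D`, with the junk value `0` outside `K`. -/
def holoEval (K D : Set ℂ) (z : ℂ) : holoSubmodule K D →L[ℂ] ℂ :=
  (evalAt K z).comp (holoSubmodule K D).subtypeL

/-- Restriction to `L` of the functions holomorphic on `D`. -/
def holoRestrict (D : Set ℂ) (h : L ⊆ K) : holoSubmodule K D →L[ℂ] C(L, ℂ) :=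
  (restrictCLM h).comp (holoSubmodule K D).subtypeL

theorem evalAt_holoRestrict (h : L ⊆ K) {z : ℂ} (hz : z ∈ L) (F : holoSubmodule K D) :
    evalAt L z (holoRestrict D h F) = holoEval K D z F :=
  evalAt_restrictCLM h hz F.1

theorem tendsto_holoEval (hDK : D ⊆ K) {z : ℂ} (hz : z ∈ K) (F : holoSubmodule K D) :
    Tendsto (fun ζ => holoEval K D ζ F) (𝓝[D] z) (𝓝 (holoEval K D z F)) :=
  (continuousOn_evalAt F.1 z hz).mono_left (nhdsWithin_mono _ hDK)

theorem exists_holoRestrict_eq (hLK : L ⊆ K) (hDK : D ⊆ K) {f : ℂ → ℂ} (hf : ContinuousOn f K)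
    (hd : DifferentiableOn ℂ f D) {φ : C(L, ℂ)} (hφ : ∀ a ∈ L, evalAt L a φ = f a) :
    ∃ F, (∀ z ∈ K, holoEval K D z F = f z) ∧ holoRestrict D hLK F = φ := by
  set F : C(K, ℂ) := ⟨K.domRestrict f, hf.domRestrict⟩
  have hF : ∀ z ∈ K, evalAt K z F = f z := fun z hz => evalAt_of_mem hz F
  refine ⟨⟨F, hd.congr fun z hz => hF z (hDK hz)⟩, hF, ext_evalAt fun a ha => ?_⟩
  rw [evalAt_holoRestrict hLK ha, hφ a ha]
  exact hF a (hLK ha)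

end HolomorphicFunctions

section CrossHull

variable {D A G B : Set ℂ}

namespace ExteriorAccessible

theorem eventually_mem_omegaSublevel (h : ExteriorAccessible D A) {c : ℝ} (hc : 0 < c) {z : ℂ}
    (hz : z ∈ omegaSublevel A D c ∪ A) : ∀ᶠ ζ in 𝓝[D] z, ζ ∈ omegaSublevel A D c := by
  rcases hz with hz | hz
  · exact mem_nhdsWithin_of_mem_nhds ((h.isOpen_omegaSublevel c).mem_nhds hz)
  · filter_upwards [self_mem_nhdsWithin, h.vanishesAt_omegaC z hz (c / 2) (half_pos hc)]
      with ζ hζ hζc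
    exact ⟨hζ, hζc.trans_lt (half_lt_self hc)⟩

theorem exists_lt_mem_omegaSublevel (h : ExteriorAccessible D A) {t : ℝ} (ht : 0 < t) {z : ℂ}
    (hz : z ∈ omegaSublevel A D t ∪ A) : ∃ c ∈ Ioo 0 t, z ∈ omegaSublevel A D c ∪ A := by
  rcases hz with hz | hz
  · obtain ⟨c, hc, hct⟩ := exists_between hz.2
    exact ⟨c, ⟨(omegaC_nonneg h.isOpen h.subset_closure hz.1).trans_lt hc, hct⟩, Or.inl ⟨hz.1, hc⟩⟩
  · exact ⟨t / 2, ⟨half_pos ht, half_lt_self ht⟩, Or.inr hz⟩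

theorem exists_lt_one_eventually_mem_omegaSublevel (h : ExteriorAccessible D A) {z : ℂ}
    (hz : z ∈ omegaSublevel A D 1 ∪ A) : ∃ c < 1, ∀ᶠ ζ in 𝓝[D] z, ζ ∈ omegaSublevel A D c := by
  obtain ⟨c, hc, hzc⟩ := h.exists_lt_mem_omegaSublevel one_pos hz
  exact ⟨c, hc.2, h.eventually_mem_omegaSublevel hc.1 hzc⟩

-- `ω` is identically `1` near a point where it takes the value `1`.
theorem inter_closure_omegaSublevel_one_subset (h : ExteriorAccessible D A) :
    D ∩ closure (omegaSublevel A D 1) ⊆ omegaSublevel A D 1 := by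
  rintro z ⟨hz, hzc⟩
  refine ⟨hz, (omegaC_le_one h.isOpen h.subset_closure hz).lt_of_ne fun h1 => ?_⟩
  obtain ⟨x, hx, hxs⟩ := mem_closure_iff.1 hzc _
    (h.isUnitSubharmonic_omegaC.isOpen_setOf_eq_one h.isOpen) ⟨hz, h1⟩
  exact hxs.2.ne hx.2

end ExteriorAccessible

/-- The cross with bases `D`, `G` and boundary parts `A`, `B`. -/
def cross (D A G B : Set ℂ) : Set (ℂ × ℂ) :=
  (D ∪ A) ×ˢ B ∪ A ×ˢ (G ∪ B)

/-- The part of the cross on which both relative extremal functions, taken to be `0` at the boundary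
points, are smaller than `1`. It consists of the points of the cross adherent to `crossHull`, and
is the whole cross if `D` and `G` are connected and `A` and `B` are nonempty. -/
def regularCross (D A G B : Set ℂ) : Set (ℂ × ℂ) :=
  cross (omegaSublevel A D 1) A (omegaSublevel B G 1) B

theorem regularCross_subset_cross (D A G B : Set ℂ) : regularCross D A G B ⊆ cross D A G B :=
  union_subset_union
    (prod_mono_left (union_subset_union_left _ (omegaSublevel_subset A D 1)))
    (prod_mono_right (union_subset_union_left _ (omegaSublevel_subset B G 1)))

theorem mem_crossHull_of_mem_omegaSublevel {c d : ℝ} (hcd : c + d ≤ 1) {p : ℂ × ℂ}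
    (h₁ : p.1 ∈ omegaSublevel A D c) (h₂ : p.2 ∈ omegaSublevel B G d) : p ∈ crossHull D A G B :=
  ⟨⟨h₁.1, h₂.1⟩, (add_lt_add h₁.2 h₂.2).trans_le hcd⟩

theorem crossHull_subset_prod (h : ExteriorAccessible D A) (h' : ExteriorAccessible G B) :
    crossHull D A G B ⊆ omegaSublevel A D 1 ×ˢ omegaSublevel B G 1 := fun _ hp =>
  ⟨⟨hp.1.1, lt_of_add_lt_of_nonneg_left hp.2 (omegaC_nonneg h'.isOpen h'.subset_closure hp.1.2)⟩,
    hp.1.2, lt_of_add_lt_of_nonneg_right hp.2 (omegaC_nonneg h.isOpen h.subset_closure hp.1.1)⟩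

theorem exists_mem_omegaSublevel_of_mem_crossHull {p : ℂ × ℂ} (hp : p ∈ crossHull D A G B) :
    ∃ c d, c + d = 1 ∧ p.1 ∈ omegaSublevel A D c ∧ p.2 ∈ omegaSublevel B G d := by
  obtain ⟨c, hc, hcp⟩ := exists_between (lt_sub_iff_add_lt.2 hp.2)
  exact ⟨c, 1 - c, add_sub_cancel c 1, ⟨hp.1.1, hc⟩, hp.1.2, lt_sub_comm.1 hcp⟩

theorem exists_mem_omegaSublevel_of_mem_union (h : ExteriorAccessible D A)
    (h' : ExteriorAccessible G B) {p : ℂ × ℂ} (hp : p ∈ crossHull D A G B ∪ regularCross D A G B) :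
    ∃ c > 0, ∃ d > 0, c + d = 1 ∧ p.1 ∈ omegaSublevel A D c ∪ A ∧
      p.2 ∈ omegaSublevel B G d ∪ B := by
  rcases hp with hp | ⟨hp₁, hp₂⟩ | ⟨hp₁, hp₂⟩
  · obtain ⟨c, d, hcd, hc, hd⟩ := exists_mem_omegaSublevel_of_mem_crossHull hp
    exact ⟨c, (omegaC_nonneg h.isOpen h.subset_closure hc.1).trans_lt hc.2, d,
      (omegaC_nonneg h'.isOpen h'.subset_closure hd.1).trans_lt hd.2, hcd, Or.inl hc, Or.inl hd⟩
  · obtain ⟨c, hc, hpc⟩ := h.exists_lt_mem_omegaSublevel one_pos hp₁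
    exact ⟨c, hc.1, 1 - c, sub_pos.2 hc.2, add_sub_cancel c 1, hpc, Or.inr hp₂⟩
  · obtain ⟨d, hd, hpd⟩ := h'.exists_lt_mem_omegaSublevel one_pos hp₂
    exact ⟨1 - d, sub_pos.2 hd.2, d, hd.1, sub_add_cancel 1 d, Or.inr hp₁, hpd⟩

theorem eventually_mem_crossHull (h : ExteriorAccessible D A) (h' : ExteriorAccessible G B)
    {p : ℂ × ℂ} (hp : p ∈ crossHull D A G B ∪ regularCross D A G B) :
    ∀ᶠ q in 𝓝[D ×ˢ G] p, q ∈ crossHull D A G B := by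
  obtain ⟨c, hc, d, hd, hcd, hpc, hpd⟩ := exists_mem_omegaSublevel_of_mem_union h h' hp
  rw [← Prod.mk.eta (p := p), nhdsWithin_prod_eq]
  filter_upwards [(h.eventually_mem_omegaSublevel hc hpc).prod_mk
    (h'.eventually_mem_omegaSublevel hd hpd)] with q hq
  exact mem_crossHull_of_mem_omegaSublevel hcd.le hq.1 hq.2

theorem isOpen_crossHull (h : ExteriorAccessible D A) (h' : ExteriorAccessible G B) :
    IsOpen (crossHull D A G B) := isOpen_iff_mem_nhds.2 fun p hp => by
  have hev := eventually_mem_crossHull h h' (Or.inl hp)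
  rwa [(h.isOpen.prod h'.isOpen).nhdsWithin_eq hp.1] at hev

theorem cross_inter_closure_crossHull_subset (h : ExteriorAccessible D A)
    (h' : ExteriorAccessible G B) :
    cross D A G B ∩ closure (crossHull D A G B) ⊆ regularCross D A G B := by
  rintro p ⟨hp, hpc⟩
  replace hpc := closure_mono (crossHull_subset_prod h h') hpc
  rw [closure_prod_eq] at hpc
  have h₁ : p.1 ∈ D ∪ A → p.1 ∈ omegaSublevel A D 1 ∪ A :=
    Or.imp_left fun hD => h.inter_closure_omegaSublevel_one_subset ⟨hD, hpc.1⟩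
  have h₂ : p.2 ∈ G ∪ B → p.2 ∈ omegaSublevel B G 1 ∪ B :=
    Or.imp_left fun hG => h'.inter_closure_omegaSublevel_one_subset ⟨hG, hpc.2⟩
  exact hp.imp (And.imp_left h₁) (And.imp_right h₂)

theorem disjoint_crossHull_cross (h : ExteriorAccessible D A) (h' : ExteriorAccessible G B) :
    Disjoint (crossHull D A G B) (cross D A G B) := by
  have hDA := disjoint_frontier_iff_isOpen.2 h.isOpen
  have hGB := disjoint_frontier_iff_isOpen.2 h'.isOpen
  refine Set.disjoint_left.2 fun p hp hpc => hpc.elim (fun hb => ?_) fun ha => ?_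
  · exact Set.disjoint_left.1 hGB (h'.subset_frontier hb.2) hp.1.2
  · exact Set.disjoint_left.1 hDA (h.subset_frontier ha.1) hp.1.1

-- Each horizontal slice of the hull is a sublevel set of `ω(·, A, D)`.
theorem eqOn_zero_crossHull (h : ExteriorAccessible D A) (h' : ExteriorAccessible G B)
    {d : ℂ × ℂ → ℂ} (hd : DifferentiableOn ℂ d (crossHull D A G B))
    (hdA : ∀ a ∈ A, ∀ w ∈ omegaSublevel B G 1,
      Tendsto d (𝓝[crossHull D A G B] (a, w)) (𝓝 0)) : EqOn d 0 (crossHull D A G B) := by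
  intro p hp
  have hw : p.2 ∈ omegaSublevel B G 1 := (crossHull_subset_prod h h' hp).2
  have hmaps : MapsTo (fun z => (z, p.2)) (omegaSublevel A D (1 - omegaC B G p.2))
      (crossHull D A G B) := fun z hz => ⟨⟨hz.1, hw.1⟩, lt_sub_iff_add_lt.1 hz.2⟩
  refine h.eqOn_zero_omegaSublevel (sub_pos.2 hw.2)
    (sub_le_self _ (omegaC_nonneg h'.isOpen h'.subset_closure hw.1))
    (hd.comp (by fun_prop) hmaps) (fun a ha => (hdA a ha p.2 hw).comp ?_)
    ⟨hp.1.1, lt_sub_iff_add_lt.2 hp.2⟩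
  exact ContinuousWithinAt.tendsto_nhdsWithin (by fun_prop) hmaps

theorem eqOn_crossHull (h : ExteriorAccessible D A) (h' : ExteriorAccessible G B)
    {g₁ g₂ φ : ℂ × ℂ → ℂ} (hg₁ : DifferentiableOn ℂ g₁ (crossHull D A G B))
    (hg₂ : DifferentiableOn ℂ g₂ (crossHull D A G B))
    (h₁ : ∀ p ∈ regularCross D A G B, Tendsto g₁ (𝓝[crossHull D A G B] p) (𝓝 (φ p)))
    (h₂ : ∀ p ∈ regularCross D A G B, Tendsto g₂ (𝓝[crossHull D A G B] p) (𝓝 (φ p))) :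
    EqOn g₁ g₂ (crossHull D A G B) := fun _ hp =>
  sub_eq_zero.1 <| eqOn_zero_crossHull h h' (hg₁.sub hg₂) (fun a ha w hw => by
    have hp : (a, w) ∈ regularCross D A G B := Or.inr ⟨ha, Or.inl hw⟩
    exact sub_self (φ (a, w)) ▸ (h₁ _ hp).sub (h₂ _ hp)) hp

theorem crossHull_mono {V A' U B' : Set ℂ} (h : ExteriorAccessible D A)
    (h' : ExteriorAccessible G B) (hV : ExteriorAccessible V A') (hU : ExteriorAccessible U B')
    (hVD : V ⊆ D) (hA : A' ⊆ A) (hUG : U ⊆ G) (hB : B' ⊆ B) :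
    crossHull V A' U B' ⊆ crossHull D A G B := fun _ hp =>
  ⟨⟨hVD hp.1.1, hUG hp.1.2⟩, (add_le_add (h.omegaC_anti hV hVD hA hp.1.1)
    (h'.omegaC_anti hU hUG hB hp.1.2)).trans_lt hp.2⟩

theorem regularCross_mono {V A' U B' : Set ℂ} (h : ExteriorAccessible D A)
    (h' : ExteriorAccessible G B) (hV : ExteriorAccessible V A') (hU : ExteriorAccessible U B')
    (hVD : V ⊆ D) (hA : A' ⊆ A) (hUG : U ⊆ G) (hB : B' ⊆ B) :
    regularCross V A' U B' ⊆ regularCross D A G B := by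
  have hω : omegaSublevel A' V 1 ⊆ omegaSublevel A D 1 := fun z hz =>
    ⟨hVD hz.1, (h.omegaC_anti hV hVD hA hz.1).trans_lt hz.2⟩
  have hω' : omegaSublevel B' U 1 ⊆ omegaSublevel B G 1 := fun z hz =>
    ⟨hUG hz.1, (h'.omegaC_anti hU hUG hB hz.1).trans_lt hz.2⟩
  exact union_subset_union (prod_mono (union_subset_union hω hA) hB)
    (prod_mono hA (union_subset_union hω' hB))

end CrossHull

section CompactExtension

variable {D A G B K L K' L' : Set ℂ} {f : ℂ × ℂ → ℂ}

theorem CrossData.of_slices (h : ExteriorAccessible D A) (h' : ExteriorAccessible G B)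
    [CompactSpace K] [CompactSpace L] (hLK : L ⊆ K) (hDK : D ⊆ K) (hAL : A ⊆ L) (hGK' : G ⊆ K')
    (hBK' : B ⊆ K') (hfc : ∀ b ∈ B, ContinuousOn (fun z => f (z, b)) K)
    (hf₁ : ∀ a ∈ L, DifferentiableOn ℂ (fun w => f (a, w)) G)
    (hf₂ : ∀ b ∈ B, DifferentiableOn ℂ (fun z => f (z, b)) D) {M : ℝ} (hM0 : 0 < M)
    (hM : ∀ p ∈ K ×ˢ B ∪ L ×ˢ K', ‖f p‖ ≤ M) {Φ : ℂ → C(L, ℂ)} (hΦc : ContinuousOn Φ K')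
    (hΦ : ∀ w ∈ K', ∀ a ∈ L, evalAt L a (Φ w) = f (a, w)) :
    CrossData D A G B (holoRestrict D hLK) (holoEval K D) Φ M where
  left := h
  right := h'
  differentiableOn_eval F := F.2
  norm_eval_le z _ F := norm_evalAt_le z F.1
  eventually_norm_eval_le F a ha ε hε := by
    have hle : ‖holoEval K D a F‖ ≤ ‖holoRestrict D hLK F‖ := by
      rw [← evalAt_holoRestrict hLK (hAL ha)]
      exact norm_evalAt_le _ _
    exact ((tendsto_holoEval hDK (hLK (hAL ha)) F).norm.eventually_lt_const
      (lt_add_of_le_of_pos hle hε)).mono fun _ => le_of_lt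
  pos := hM0
  differentiableOn := differentiableOn_of_separating h'.isOpen (hΦc.mono hGK')
    (fun a : L => evalAt L a) (fun _ _ hxy => ext_evalAt fun z hz => hxy ⟨z, hz⟩)
    fun a => (hf₁ a a.2).congr fun w hw => hΦ w (hGK' hw) a a.2
  norm_le w hw := norm_le_of_norm_evalAt_le hM0.le fun a ha => by
    rw [hΦ w (hGK' hw) a ha]
    exact hM _ (Or.inr ⟨ha, hGK' hw⟩)
  exists_tendsto b hb := by
    obtain ⟨F, hF, hFΦ⟩ := exists_holoRestrict_eq hLK hDK (hfc b hb) (hf₂ b hb) (hΦ b (hBK' hb))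
    refine ⟨F, norm_le_of_norm_evalAt_le hM0.le fun z hz => ?_, ?_⟩
    · exact (congrArg norm (hF z hz)).trans_le (hM _ (Or.inl ⟨hz, hb⟩))
    · rw [hFΦ]
      exact (hΦc b (hBK' hb)).mono_left (nhdsWithin_mono _ hGK')

theorem exists_extension_of_isCompact (h : ExteriorAccessible D A) (h' : ExteriorAccessible G B)
    (hK : IsCompact K) (hL : IsCompact L) (hK' : IsCompact K') (hL' : IsCompact L') (hLK : L ⊆ K)
    (hLK' : L' ⊆ K') (hDK : D ⊆ K) (hAL : A ⊆ L) (hGK' : G ⊆ K') (hBL' : B ⊆ L')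
    (hf : ContinuousOn f (K ×ˢ L' ∪ L ×ˢ K'))
    (hf₁ : ∀ a ∈ L, DifferentiableOn ℂ (fun w => f (a, w)) G)
    (hf₂ : ∀ b ∈ B, DifferentiableOn ℂ (fun z => f (z, b)) D) :
    ∃ g : ℂ × ℂ → ℂ, DifferentiableOn ℂ g (crossHull D A G B) ∧
      ∀ p ∈ regularCross D A G B, Tendsto g (𝓝[D ×ˢ G] p) (𝓝 (f p)) := by
  have := isCompact_iff_compactSpace.1 hK
  have := isCompact_iff_compactSpace.1 hL
  obtain ⟨M, hM⟩ := ((hK.prod hL').union (hL.prod hK')).exists_bound_of_continuousOn hf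
  obtain ⟨Φ, hΦc, hΦ⟩ := exists_continuousOn_evalAt_eq (hf.mono subset_union_right)
  have hslice : ∀ b ∈ B, ContinuousOn (fun z => f (z, b)) K := fun b hb =>
    hf.comp (by fun_prop) fun z hz => Or.inl ⟨hz, hBL' hb⟩
  have hBK' : B ⊆ K' := hBL'.trans hLK'
  have hdata := CrossData.of_slices h h' hLK hDK hAL hGK' hBK' hslice hf₁ hf₂
    (lt_max_of_lt_right one_pos : 0 < max M 1) (fun p hp => (hM p
      (union_subset_union_left _ (prod_mono_right hBL') hp)).trans (le_max_left M 1)) hΦc hΦ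
  obtain ⟨Λ, F, hΛF⟩ := hdata.exists_isApproximation
  have hright : ∀ z ∈ omegaSublevel A D 1 ∪ A, ∀ b ∈ B,
      Tendsto (crossLimit Λ Φ) (𝓝[D ×ˢ G] (z, b)) (𝓝 (f (z, b))) := fun z hz b hb => by
    obtain ⟨x, hx, hxΦ⟩ := exists_holoRestrict_eq hLK hDK (hslice b hb) (hf₂ b hb) (hΦ b (hBK' hb))
    obtain ⟨c, hc, hzc⟩ := h.exists_lt_one_eventually_mem_omegaSublevel hz
    have hzK : z ∈ K := hz.elim (fun hz => hDK hz.1) fun hz => hLK (hAL hz)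
    rw [← hx z hzK]
    refine hdata.tendsto_crossLimit_right hΛF hb hc (hzc.mono fun _ hζ => hζ.2) ?_
      (tendsto_holoEval hDK hzK x)
    rw [hxΦ]
    exact (hΦc b (hBK' hb)).mono_left (nhdsWithin_mono _ hGK')
  refine ⟨crossLimit Λ Φ, hdata.differentiableOn_crossLimit hΛF, ?_⟩
  rintro ⟨z, w⟩ (⟨hz, hw⟩ | ⟨hz, hw | hw⟩)
  · exact hright z hz w hw
  · rw [← hΦ w (hGK' hw.1) z (hAL hz)]
    refine hdata.tendsto_crossLimit_left hΛF hz hw fun x => ?_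
    rw [evalAt_holoRestrict hLK (hAL hz)]
    exact tendsto_holoEval hDK (hLK (hAL hz)) x
  · exact hright z (Or.inr hz) w hw

end CompactExtension

section Gluing

variable {D A G B : Set ℂ} {N N' : ℕ → Set ℂ} {f : ℂ × ℂ → ℂ}

theorem exists_forall_eqOn {α β : Type*} {H : ℕ → Set α} {g : ℕ → α → β}
    (hg : ∀ i j, i ≤ j → EqOn (g i) (g j) (H i)) (f : α → β) :
    ∃ F : α → β, (∀ j, EqOn F (g j) (H j)) ∧ EqOn F f (⋃ j, H j)ᶜ := by
  classical
  refine ⟨fun p => if h : ∃ j, p ∈ H j then g (Nat.find h) p else f p, fun j p hp => ?_,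
    fun p hp => dif_neg fun h => hp (mem_iUnion.2 h)⟩
  have h : ∃ j, p ∈ H j := ⟨j, hp⟩
  exact (dif_pos h).trans (hg _ j (Nat.find_min' h hp) (Nat.find_spec h))

namespace IsExhaustion

theorem eventually_mem_crossHull (hN : IsExhaustion N D A) (hN' : IsExhaustion N' G B)
    (h : ExteriorAccessible D A) (h' : ExteriorAccessible G B) {p : ℂ × ℂ}
    (hp : p ∈ crossHull D A G B) :
    ∀ᶠ j in atTop, p ∈ crossHull (D ∩ N j) (A ∩ N j) (G ∩ N' j) (B ∩ N' j) := by
  obtain ⟨c, d, hcd, hc, hd⟩ := exists_mem_omegaSublevel_of_mem_crossHull hp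
  filter_upwards [hN.eventually_mem_omegaSublevel h hc, hN'.eventually_mem_omegaSublevel h' hd]
    with j hj hj' using mem_crossHull_of_mem_omegaSublevel hcd.le hj hj'

theorem eventually_mem_regularCross (hN : IsExhaustion N D A) (hN' : IsExhaustion N' G B)
    (h : ExteriorAccessible D A) (h' : ExteriorAccessible G B) {p : ℂ × ℂ}
    (hp : p ∈ regularCross D A G B) :
    ∀ᶠ j in atTop, p ∈ regularCross (D ∩ N j) (A ∩ N j) (G ∩ N' j) (B ∩ N' j) := by
  have hA : p.1 ∈ A → ∀ᶠ j in atTop, p.1 ∈ A ∩ N j := fun ha =>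
    (hN.eventually_mem (Or.inr ha)).mono fun _ hj => ⟨ha, hj⟩
  have hB : p.2 ∈ B → ∀ᶠ j in atTop, p.2 ∈ B ∩ N' j := fun hb =>
    (hN'.eventually_mem (Or.inr hb)).mono fun _ hj => ⟨hb, hj⟩
  rcases hp with ⟨hz | ha, hb⟩ | ⟨ha, hw | hb⟩
  · filter_upwards [hN.eventually_mem_omegaSublevel h hz, hB hb] with j hj hj'
      using Or.inl ⟨Or.inl hj, hj'⟩
  · filter_upwards [hA ha, hB hb] with j hj hj' using Or.inl ⟨Or.inr hj, hj'⟩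
  · filter_upwards [hA ha, hN'.eventually_mem_omegaSublevel h' hw] with j hj hj'
      using Or.inr ⟨hj, Or.inl hj'⟩
  · filter_upwards [hA ha, hB hb] with j hj hj' using Or.inr ⟨hj, Or.inr hj'⟩

theorem closure_inter_frontier_subset (hN : IsExhaustion N D A) (hD : IsOpen D) (j : ℕ) :
    closure (N j) ∩ frontier D ⊆ A := fun _ hz =>
  (hN.closure_inter_closure_subset j ⟨hz.1, frontier_subset_closure hz.2⟩).resolve_left fun hzD =>
    Set.disjoint_left.1 (disjoint_frontier_iff_isOpen.2 hD) hz.2 hzD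

theorem exists_extension (hN : IsExhaustion N D A) (hN' : IsExhaustion N' G B)
    (h : ExteriorAccessible D A) (h' : ExteriorAccessible G B)
    (hf : ContinuousOn f (cross D A G B))
    (hf₁ : ∀ a ∈ A, DifferentiableOn ℂ (fun w => f (a, w)) G)
    (hf₂ : ∀ b ∈ B, DifferentiableOn ℂ (fun z => f (z, b)) D) (j : ℕ) :
    ∃ g : ℂ × ℂ → ℂ,
      DifferentiableOn ℂ g (crossHull (D ∩ N j) (A ∩ N j) (G ∩ N' j) (B ∩ N' j)) ∧
      ∀ p ∈ regularCross (D ∩ N j) (A ∩ N j) (G ∩ N' j) (B ∩ N' j),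
        Tendsto g (𝓝[(D ∩ N j) ×ˢ (G ∩ N' j)] p) (𝓝 (f p)) := by
  have hsub : ∀ {V Y N₀ : Set ℂ}, V ⊆ Y → V ∩ N₀ ⊆ closure N₀ ∩ Y := fun hVY _ hz =>
    ⟨subset_closure hz.2, hVY hz.1⟩
  have hL := hN.closure_inter_frontier_subset h.isOpen j
  have hL' := hN'.closure_inter_frontier_subset h'.isOpen j
  have hK := h.isBounded.isCompact_closure
  have hK' := h'.isBounded.isCompact_closure
  exact exists_extension_of_isCompact (h.inter (hN.isOpen j)) (h'.inter (hN'.isOpen j))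
    (hK.inter_left isClosed_closure) ((hK.of_isClosed_subset isClosed_frontier
      frontier_subset_closure).inter_left isClosed_closure) (hK'.inter_left isClosed_closure)
    ((hK'.of_isClosed_subset isClosed_frontier frontier_subset_closure).inter_left
      isClosed_closure) (inter_subset_inter_right _ frontier_subset_closure)
    (inter_subset_inter_right _ frontier_subset_closure) (hsub subset_closure)
    (hsub h.subset_frontier) (hsub subset_closure) (hsub h'.subset_frontier)
    (hf.mono (union_subset_union (prod_mono (hN.closure_inter_closure_subset j) hL')
      (prod_mono hL (hN'.closure_inter_closure_subset j))))
    (fun a ha => (hf₁ a (hL ha)).mono inter_subset_left)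
    (fun b hb => (hf₂ b hb.1).mono inter_subset_left)

end IsExhaustion

theorem eqOn_crossHull_of_subset {V A' U B' : Set ℂ} {g₁ g₂ φ : ℂ × ℂ → ℂ}
    (h : ExteriorAccessible D A) (h' : ExteriorAccessible G B) (hV : ExteriorAccessible V A')
    (hU : ExteriorAccessible U B') (hVD : V ⊆ D) (hA : A' ⊆ A) (hUG : U ⊆ G) (hB : B' ⊆ B)
    (hg₁ : DifferentiableOn ℂ g₁ (crossHull V A' U B'))
    (hg₂ : DifferentiableOn ℂ g₂ (crossHull D A G B))
    (h₁ : ∀ p ∈ regularCross V A' U B', Tendsto g₁ (𝓝[V ×ˢ U] p) (𝓝 (φ p)))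
    (h₂ : ∀ p ∈ regularCross D A G B, Tendsto g₂ (𝓝[D ×ˢ G] p) (𝓝 (φ p))) :
    EqOn g₁ g₂ (crossHull V A' U B') := by
  have hsub : crossHull V A' U B' ⊆ crossHull D A G B := crossHull_mono h h' hV hU hVD hA hUG hB
  exact eqOn_crossHull hV hU hg₁ (hg₂.mono hsub)
    (fun p hp => (h₁ p hp).mono_left (nhdsWithin_mono _ fun q hq => hq.1))
    fun p hp => (h₂ p (regularCross_mono h h' hV hU hVD hA hUG hB hp)).mono_left
      (nhdsWithin_mono _ fun q hq => (hsub hq).1)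

theorem exists_extension_crossHull (h : ExteriorAccessible D A) (h' : ExteriorAccessible G B)
    (hf : ContinuousOn f (cross D A G B))
    (hf₁ : ∀ a ∈ A, DifferentiableOn ℂ (fun w => f (a, w)) G)
    (hf₂ : ∀ b ∈ B, DifferentiableOn ℂ (fun z => f (z, b)) D) :
    ∃ F : ℂ × ℂ → ℂ, DifferentiableOn ℂ F (crossHull D A G B) ∧
      (∀ p ∈ regularCross D A G B, Tendsto F (𝓝[crossHull D A G B] p) (𝓝 (f p))) ∧
      EqOn F f (crossHull D A G B)ᶜ := by
  obtain ⟨N, hN⟩ := h.exists_isExhaustion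
  obtain ⟨N', hN'⟩ := h'.exists_isExhaustion
  have hj := fun j => h.inter (hN.isOpen j)
  have hj' := fun j => h'.inter (hN'.isOpen j)
  choose g hg hgf using hN.exists_extension hN' h h' hf hf₁ hf₂
  set H := fun j => crossHull (D ∩ N j) (A ∩ N j) (G ∩ N' j) (B ∩ N' j)
  have hHD : ∀ j, H j ⊆ crossHull D A G B := fun j => crossHull_mono h h' (hj j) (hj' j)
    inter_subset_left inter_subset_left inter_subset_left inter_subset_left
  have hcons : ∀ i j, i ≤ j → EqOn (g i) (g j) (H i) := fun i j hij =>
    eqOn_crossHull_of_subset (hj j) (hj' j) (hj i) (hj' i)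
      (inter_subset_inter_right _ (hN.monotone hij)) (inter_subset_inter_right _ (hN.monotone hij))
      (inter_subset_inter_right _ (hN'.monotone hij))
      (inter_subset_inter_right _ (hN'.monotone hij)) (hg i) (hg j) (hgf i) (hgf j)
  obtain ⟨F, hFg, hFf⟩ := exists_forall_eqOn hcons f
  refine ⟨F, fun p hp => ?_, fun p hp => ?_, hFf.mono (compl_subset_compl.2 (iUnion_subset hHD))⟩
  · obtain ⟨j, hpj⟩ := (hN.eventually_mem_crossHull hN' h h' hp).exists
    have hnhds := (isOpen_crossHull (hj j) (hj' j)).mem_nhds hpj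
    exact (((hg j).differentiableAt hnhds).congr_of_eventuallyEq
      ((hFg j).eventuallyEq_of_mem hnhds)).differentiableWithinAt
  · obtain ⟨j, hpj⟩ := (hN.eventually_mem_regularCross hN' h h' hp).exists
    have hpN : p ∈ N j ×ˢ N' j := by
      rcases hpj with ⟨hz | hz, hw⟩ | ⟨hz, hw | hw⟩
      exacts [⟨hz.1.2, hw.2⟩, ⟨hz.2, hw.2⟩, ⟨hz.2, hw.1.2⟩, ⟨hz.2, hw.2⟩]
    have hle : 𝓝[crossHull D A G B] p ≤ 𝓝[(D ∩ N j) ×ˢ (G ∩ N' j)] p := by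
      refine nhdsWithin_le_of_mem ?_
      filter_upwards [self_mem_nhdsWithin, mem_nhdsWithin_of_mem_nhds
        (((hN.isOpen j).prod (hN'.isOpen j)).mem_nhds hpN)] with q hq hqN
        using ⟨⟨hq.1.1, hqN.1⟩, hq.1.2, hqN.2⟩
    refine ((hgf j p hpj).mono_left hle).congr' ?_
    filter_upwards [(eventually_mem_crossHull (hj j) (hj' j) (Or.inr hpj)).filter_mono hle]
      with q hq using (hFg j hq).symm

end Gluing

section JordanDomain

theorem exists_path_homeomorph_sphere {X : Type*} [TopologicalSpace X] (φ : sphere (0 : ℂ) 1 ≃ₜ X)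
    (a : X) : ∃ γ : ℝ → X, Continuous γ ∧ γ 0 = a ∧ γ π ≠ a := by
  obtain ⟨x, rfl⟩ := φ.surjective a
  have hmem : ∀ t : ℝ, (x : ℂ) * Complex.exp (t * I) ∈ sphere (0 : ℂ) 1 := fun t => by
    rw [mem_sphere_zero_iff_norm, norm_mul, mem_sphere_zero_iff_norm.1 x.2,
      Complex.norm_exp_ofReal_mul_I, one_mul]
  refine ⟨fun t => φ ⟨_, hmem t⟩, φ.continuous.comp (by fun_prop), congrArg φ (by ext; simp),
    fun hπ => ?_⟩
  have hneg : -(x : ℂ) = x := by simpa using congrArg Subtype.val (φ.injective hπ)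
  exact ne_of_mem_sphere x.2 one_ne_zero (neg_eq_self.1 hneg)

theorem IsJordanDomain.exteriorAccessible {D A : Set ℂ} (hD : IsJordanDomain D)
    (hA : ∃ V : Set ℂ, IsOpen V ∧ A = V ∩ frontier D) : ExteriorAccessible D A where
  isOpen := hD.1
  isBounded := hD.2.2.1
  exists_isOpen_inter := hA
  exists_path a ha := by
    obtain ⟨V, -, rfl⟩ := hA
    obtain ⟨φ⟩ := hD.2.2.2
    obtain ⟨γ, hγ, hγ0, hγπ⟩ := exists_path_homeomorph_sphere φ ⟨a, ha.2⟩
    exact ⟨fun t => γ t, by fun_prop,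
      fun t ht => Set.disjoint_left.1 (disjoint_frontier_iff_isOpen.2 hD.1) (γ t).2 ht,
      congrArg Subtype.val hγ0, π, Real.pi_pos, fun hπ => hγπ (Subtype.ext hπ)⟩

end JordanDomain

theorem gonchar_boundary_cross_general {D A G B : Set ℂ} (hDA : ExteriorAccessible D A)
    (hGB : ExteriorAccessible G B) {f : ℂ × ℂ → ℂ} (hfc : ContinuousOn f (cross D A G B))
    (hf1 : ∀ a ∈ A, DifferentiableOn ℂ (fun w => f (a, w)) G)
    (hf2 : ∀ b ∈ B, DifferentiableOn ℂ (fun z => f (z, b)) D) :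
    ∃ fhat : ℂ × ℂ → ℂ,
      (ContinuousOn fhat (crossHull D A G B ∪ cross D A G B) ∧
        DifferentiableOn ℂ fhat (crossHull D A G B) ∧ EqOn fhat f (cross D A G B)) ∧
      ∀ g : ℂ × ℂ → ℂ, (ContinuousOn g (crossHull D A G B ∪ cross D A G B) ∧
        DifferentiableOn ℂ g (crossHull D A G B) ∧ EqOn g f (cross D A G B)) →
        EqOn g fhat (crossHull D A G B ∪ cross D A G B) := by
  obtain ⟨F, hFd, hFlim, hFf⟩ := exists_extension_crossHull hDA hGB hfc hf1 hf2
  have heq : EqOn F f (cross D A G B) :=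
    hFf.mono (disjoint_crossHull_cross hDA hGB).subset_compl_left
  refine ⟨F, ⟨?_, hFd, heq⟩, fun g ⟨hgc, hgd, hge⟩ => ?_⟩
  · rintro p (hp | hp)
    · exact ((hFd p hp).differentiableAt ((isOpen_crossHull hDA hGB).mem_nhds hp)
        ).continuousAt.continuousWithinAt
    · refine ContinuousWithinAt.union ?_ ((hfc p hp).congr heq (heq hp))
      by_cases hpc : p ∈ closure (crossHull D A G B)
      · rw [ContinuousWithinAt, heq hp]
        exact hFlim p (cross_inter_closure_crossHull_subset hDA hGB ⟨hp, hpc⟩)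
      · exact continuousWithinAt_of_notMem_closure hpc
  · refine (eqOn_crossHull hDA hGB hgd hFd (fun p hp => ?_) hFlim).union (hge.trans heq.symm)
    have hpc := regularCross_subset_cross D A G B hp
    rw [← hge hpc]
    exact (hgc p (Or.inr hpc)).mono_left (nhdsWithin_mono _ subset_union_left)

/-- Gonchar's boundary cross theorem. -/
theorem gonchar_boundary_cross
    (D G : Set ℂ) (hD : IsJordanDomain D) (hG : IsJordanDomain G)
    (A B : Set ℂ) (hAne : A.Nonempty) (hBne : B.Nonempty)
    (hA : ∃ V : Set ℂ, IsOpen V ∧ A = V ∩ frontier D)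
    (hB : ∃ V : Set ℂ, IsOpen V ∧ B = V ∩ frontier G)
    (f : ℂ × ℂ → ℂ)
    (hfc : ContinuousOn f (((D ∪ A) ×ˢ B) ∪ (A ×ˢ (G ∪ B))))
    (hf1 : ∀ a ∈ A, DifferentiableOn ℂ (fun w => f (a, w)) G)
    (hf2 : ∀ b ∈ B, DifferentiableOn ℂ (fun z => f (z, b)) D) :
    ∃ fhat : ℂ × ℂ → ℂ,
      (ContinuousOn fhat
          ({p ∈ D ×ˢ G | omegaC A D p.1 + omegaC B G p.2 < 1} ∪
            (((D ∪ A) ×ˢ B) ∪ (A ×ˢ (G ∪ B)))) ∧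
        DifferentiableOn ℂ fhat {p ∈ D ×ˢ G | omegaC A D p.1 + omegaC B G p.2 < 1} ∧
        Set.EqOn fhat f (((D ∪ A) ×ˢ B) ∪ (A ×ˢ (G ∪ B)))) ∧
      ∀ g : ℂ × ℂ → ℂ,
        (ContinuousOn g
            ({p ∈ D ×ˢ G | omegaC A D p.1 + omegaC B G p.2 < 1} ∪
              (((D ∪ A) ×ˢ B) ∪ (A ×ˢ (G ∪ B)))) ∧
          DifferentiableOn ℂ g {p ∈ D ×ˢ G | omegaC A D p.1 + omegaC B G p.2 < 1} ∧
          Set.EqOn g f (((D ∪ A) ×ˢ B) ∪ (A ×ˢ (G ∪ B)))) →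
        Set.EqOn g fhat
          ({p ∈ D ×ˢ G | omegaC A D p.1 + omegaC B G p.2 < 1} ∪
            (((D ∪ A) ×ˢ B) ∪ (A ×ˢ (G ∪ B)))) :=
  gonchar_boundary_cross_general (hD.exteriorAccessible hA) (hG.exteriorAccessible hB) hfc hf1 hf2

end
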